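/- arXiv:1506.08317 — 4 statements merged into one kernel-verified Lean document; each statement's English description precedes it below -/
import Mathlib

section
/- Let Φ be a Young function. Then there exists a constant c > 0, depending only on Φ and not on r, such that for every r ∈ (1,2), every locally integrable f, and every x ∈ ℝ: M_Φ f(x) ≤ c·( sup_{t ≥ 1} Φ(t)^{1/r}/t )·M_r f(x). -/
open MeasureTheory Set Filter Topology
open scoped ENNReal

noncomputable section

namespace RT

/-- The Hilbert transform `Hf(x)`, defined as the principal-value limit
`lim_{ε→0⁺} ∫_{|x-y|>ε} f(y)/(x-y) dy` (junk value at points where the limit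
does not exist). -/
def Hil (f : ℝ → ℝ) (x : ℝ) : ℝ :=
  limUnder (𝓝[>] (0 : ℝ)) fun ε => ∫ y in {y : ℝ | ε < |x - y|}, f y / (x - y)

/-- The (uncentered) Hardy–Littlewood maximal function over bounded intervals:
`Mf(x) = sup_{I ∋ x} (1/|I|) ∫_I |f|`. -/
def HLMax (f : ℝ → ℝ) (x : ℝ) : ℝ≥0∞ :=
  ⨆ (a : ℝ) (b : ℝ) (_ : a < b) (_ : x ∈ Icc a b),
    (ENNReal.ofReal (b - a))⁻¹ * ∫⁻ y in Ioo a b, ENNReal.ofReal |f y|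

/-- `M_r f = (M(|f|^r))^{1/r}`. -/
def Mr (r : ℝ) (f : ℝ → ℝ) (x : ℝ) : ℝ≥0∞ :=
  HLMax (fun y => |f y| ^ r) x ^ (1 / r)

/-- The Orlicz maximal operator
`M_Φ f(x) = sup_{I ∋ x} inf {λ > 0 : (1/|I|) ∫_I Φ(|f|/λ) ≤ 1}`. -/
def MOrlicz (Φ : ℝ → ℝ) (f : ℝ → ℝ) (x : ℝ) : ℝ≥0∞ :=
  ⨆ (a : ℝ) (b : ℝ) (_ : a < b) (_ : x ∈ Icc a b),
    sInf {lam : ℝ≥0∞ | ∃ l : ℝ, 0 < l ∧ lam = ENNReal.ofReal l ∧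
      (∫⁻ y in Ioo a b, ENNReal.ofReal (Φ (|f y| / l))) ≤ ENNReal.ofReal (b - a)}

/-- The centered maximal operator with respect to a weight `v`:
`M^c_v h(x) = sup_{ρ>0} (1/v(B(x,ρ))) ∫_{B(x,ρ)} |h| v`. -/
def Mc (v h : ℝ → ℝ) (x : ℝ) : ℝ≥0∞ :=
  ⨆ (ρ : ℝ) (_ : 0 < ρ),
    (∫⁻ y in Ioo (x - ρ) (x + ρ), ENNReal.ofReal (v y))⁻¹ *
      ∫⁻ y in Ioo (x - ρ) (x + ρ), ENNReal.ofReal |h y| * ENNReal.ofReal (v y)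

/-- A Young function: convex, increasing, `Φ(0) = 0`, `Φ(t)/t → ∞`. -/
structure IsYoung (Φ : ℝ → ℝ) : Prop where
  convexOn : ConvexOn ℝ (Ici 0) Φ
  mono : MonotoneOn Φ (Ici 0)
  map_zero : Φ 0 = 0
  superlinear : Tendsto (fun t => Φ t / t) atTop atTop

/-- A weight: a nonnegative locally integrable function on `ℝ`. -/
def IsWeight (w : ℝ → ℝ) : Prop :=
  (∀ x, 0 ≤ w x) ∧ LocallyIntegrable w volume

/-! Triadic machinery: intervals are represented by their endpoint pairs,
`(a, b)` corresponding to `[a, b)`. -/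

/-- The length of the interval. -/
def len (I : ℝ × ℝ) : ℝ := I.2 - I.1

/-- The set `[a, b)` of the interval `I = (a, b)`. -/
def ivl (I : ℝ × ℝ) : Set ℝ := Ico I.1 I.2

/-- A triadic interval `[3^j n, 3^j (n+1))`, `j, n ∈ ℤ`. -/
def IsTriadic (I : ℝ × ℝ) : Prop :=
  ∃ j n : ℤ, I.1 = (3 : ℝ) ^ j * n ∧ I.2 = (3 : ℝ) ^ j * (n + 1)

/-- The middle third `I^Δ` of `I`: same center, one third of the length. -/
def mid (I : ℝ × ℝ) : ℝ × ℝ := (I.1 + (I.2 - I.1) / 3, I.2 - (I.2 - I.1) / 3)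

/-- `P` assigns to each triadic interval `J ⊆ [0,1)` a triadic interval
adjacent to `J^Δ` (on its left or on its right) with `|P J| = 3^{-k} |J|`. -/
def GoodP (k : ℕ) (P : ℝ × ℝ → ℝ × ℝ) : Prop :=
  ∀ J : ℝ × ℝ, IsTriadic J → ivl J ⊆ Ico (0 : ℝ) 1 →
    IsTriadic (P J) ∧ len (P J) = len J / 3 ^ k ∧
      ((P J).2 = (mid J).1 ∨ (P J).1 = (mid J).2)

/-- The families `𝒥_l`: `𝒥_1 = {[0,1)}`, and `𝒥_{l+1}` consists of the `3^{k-1}`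
triadic subintervals of `J^Δ` of length `|J|/3^k`, for each `J ∈ 𝒥_l`.
(`𝒥_0` is empty.) -/
def Jfam (k : ℕ) : ℕ → Set (ℝ × ℝ)
  | 0 => ∅
  | 1 => {((0 : ℝ), (1 : ℝ))}
  | l + 2 => {J' | IsTriadic J' ∧ ∃ J ∈ Jfam k (l + 1),
      len J' = len J / 3 ^ k ∧ ivl J' ⊆ ivl (mid J)}

/-- The families `ℐ_l = {P J : J ∈ 𝒥_l}`. -/
def Ifam (k : ℕ) (P : ℝ × ℝ → ℝ × ℝ) (l : ℕ) : Set (ℝ × ℝ) :=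
  P '' Jfam k l

/-- `Ω_l = ⋃_{I ∈ ℐ_l} I`. -/
def Omega (k : ℕ) (P : ℝ × ℝ → ℝ × ℝ) (l : ℕ) : Set ℝ :=
  ⋃ I ∈ Ifam k P l, ivl I

/-- The constant `3^k / (3^{k-1} + 1)`. -/
def alpha (k : ℕ) : ℝ := 3 ^ k / (3 ^ (k - 1) + 1)

/-- The Reguera–Thiele weight
`w_k = ∑_{l=1}^∞ (3^k/(3^{k-1}+1))^l χ_{Ω_l}`. -/
def wk (k : ℕ) (P : ℝ × ℝ → ℝ × ℝ) (x : ℝ) : ℝ :=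
  ∑' l : ℕ, alpha k ^ (l + 1) * (Omega k P (l + 1)).indicator (fun _ => (1 : ℝ)) x

theorem young_nonneg {Φ : ℝ → ℝ} (h : IsYoung Φ) {t : ℝ} (ht : 0 ≤ t) : 0 ≤ Φ t := by
  have := h.mono (mem_Ici.2 le_rfl) (mem_Ici.2 ht) ht
  rwa [h.map_zero] at this

theorem young_div {Φ : ℝ → ℝ} (h : IsYoung Φ) {t K : ℝ} (ht : 0 ≤ t) (hK : 1 ≤ K) :
    Φ (t / K) ≤ Φ t / K := by
  have hK0 : 0 < K := by linarith
  have h1 : K⁻¹ ≤ 1 := inv_le_one_of_one_le₀ hK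
  have := h.convexOn.2 (mem_Ici.2 ht) (mem_Ici.2 (le_refl (0 : ℝ)))
    (inv_nonneg.2 hK0.le) (sub_nonneg.2 h1) (by ring)
  simp only [smul_eq_mul, mul_zero, add_zero, h.map_zero] at this
  rw [div_eq_inv_mul, div_eq_inv_mul]
  exact this

/-- Pointwise bound. -/
theorem young_bound {Φ : ℝ → ℝ} (h : IsYoung Φ) {r s : ℝ} (hr : 1 < r) (hs : 0 ≤ s)
    (hS : ∀ t, 1 ≤ t → Φ t ^ (1 / r) / t ≤ s) {t : ℝ} (ht : 0 ≤ t) :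
    Φ t ≤ Φ 1 + s ^ r * t ^ r := by
  rcases le_total t 1 with h1 | h1
  · have := h.mono (mem_Ici.2 ht) (mem_Ici.2 zero_le_one) h1
    have : 0 ≤ s ^ r * t ^ r := by positivity
    linarith
  · have ht0 : 0 < t := by linarith
    have h2 := (div_le_iff₀ ht0).1 (hS t h1)
    have h3 := young_nonneg h ht
    have h4 := Real.rpow_le_rpow (by positivity) h2 (by linarith : 0 ≤ r)
    rw [← Real.rpow_mul h3, one_div_mul_cancel (by linarith), Real.rpow_one,
      Real.mul_rpow hs ht] at h4
    have := young_nonneg h zero_le_one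
    linarith

theorem interval_bound {Φ : ℝ → ℝ} (h : IsYoung Φ) {r : ℝ} (hr : 1 < r)
    {f : ℝ → ℝ} (hf : LocallyIntegrable f volume) {a b : ℝ} (hab : a < b) :
    sInf {lam : ℝ≥0∞ | ∃ l : ℝ, 0 < l ∧ lam = ENNReal.ofReal l ∧
      (∫⁻ y in Ioo a b, ENNReal.ofReal (Φ (|f y| / l))) ≤ ENNReal.ofReal (b - a)}
    ≤ ENNReal.ofReal (Φ 1 + 1) *
        (⨆ (t : ℝ) (_ : 1 ≤ t), ENNReal.ofReal (Φ t ^ (1 / r) / t)) *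
        ((ENNReal.ofReal (b - a))⁻¹ * ∫⁻ y in Ioo a b, ENNReal.ofReal |(|f y| ^ r)|) ^ (1 / r) := by
  set S : ℝ≥0∞ := ⨆ (t : ℝ) (_ : 1 ≤ t), ENNReal.ofReal (Φ t ^ (1 / r) / t) with hSdef
  set N : ℝ≥0∞ := ∫⁻ y in Ioo a b, ENNReal.ofReal |(|f y| ^ r)| with hN
  have hr0 : 0 < r := by linarith
  have hba : 0 < b - a := by linarith
  have hΦ1 := young_nonneg h zero_le_one
  have hL0 : ENNReal.ofReal (b - a) ≠ 0 := by simpa using hab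
  have hLt : ENNReal.ofReal (b - a) ≠ ⊤ := ENNReal.ofReal_ne_top
  have hK0 : ENNReal.ofReal (Φ 1 + 1) ≠ 0 := by
    have : 0 < Φ 1 + 1 := by linarith
    simpa using this
  by_cases hN0 : N = 0
  · have hm : AEMeasurable (fun y => ENNReal.ofReal |(|f y| ^ r)|) (volume.restrict (Ioo a b)) := by
      have : AEMeasurable f (volume.restrict (Ioo a b)) :=
        hf.aestronglyMeasurable.aemeasurable.restrict
      exact ((this.norm.pow_const r).norm).ennreal_ofReal
    have h0 := (lintegral_eq_zero_iff' hm).1 hN0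
    have h1 : ∀ l : ℝ, ∫⁻ y in Ioo a b, ENNReal.ofReal (Φ (|f y| / l)) = 0 := by
      intro l
      rw [← lintegral_zero (μ := volume.restrict (Ioo a b))]
      apply lintegral_congr_ae
      filter_upwards [h0] with y hy
      have h2 : |f y| ^ r = 0 := by
        have := ENNReal.ofReal_eq_zero.1 hy
        exact abs_eq_zero.1 (le_antisymm this (abs_nonneg _))
      have h3 : |f y| = 0 := ((Real.rpow_eq_zero_iff_of_nonneg (abs_nonneg _)).1 h2).1
      simp [h3, h.map_zero]
    refine le_trans ?_ bot_le
    apply ENNReal.le_of_forall_pos_le_add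
    intro ε hε _
    refine sInf_le ⟨ε, by exact_mod_cast hε, by simp, ?_⟩
    rw [h1]; exact bot_le
  have hS0 : S ≠ 0 := by
    obtain ⟨t, ht1, ht⟩ := ((eventually_ge_atTop (1 : ℝ)).and
      (h.superlinear.eventually_gt_atTop 0)).exists
    have ht0 : 0 < t := by linarith
    have hp : 0 < Φ t := by
      have := mul_pos ht ht0
      rwa [div_mul_cancel₀ _ ht0.ne'] at this
    have h5 : 0 < Φ t ^ (1 / r) / t := by positivity
    have : ENNReal.ofReal (Φ t ^ (1 / r) / t) ≤ S :=
      le_iSup₂ (f := fun (t : ℝ) (_ : 1 ≤ t) => ENNReal.ofReal (Φ t ^ (1 / r) / t)) t ht1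
    exact (lt_of_lt_of_le (ENNReal.ofReal_pos.2 h5) this).ne'
  set B : ℝ≥0∞ := (ENNReal.ofReal (b - a))⁻¹ * N with hB
  have hB0 : B ≠ 0 := mul_ne_zero (ENNReal.inv_ne_zero.2 hLt) hN0
  have hA0 : B ^ (1 / r) ≠ 0 := by
    intro h0
    rcases ENNReal.rpow_eq_zero_iff.1 h0 with h1 | h1
    · exact hB0 h1.1
    · have : 0 < 1 / r := by positivity
      linarith [h1.2]
  by_cases hSt : S = ⊤
  · rw [hSt, ENNReal.mul_top hK0, ENNReal.top_mul hA0]; exact le_top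
  by_cases hBt : B = ⊤
  · rw [hBt, ENNReal.top_rpow_of_pos (by positivity), ENNReal.mul_top (mul_ne_zero hK0 hS0)]
    exact le_top
  obtain ⟨s, hs, hsS⟩ : ∃ s : ℝ, 0 < s ∧ S = ENNReal.ofReal s :=
    ⟨S.toReal, ENNReal.toReal_pos hS0 hSt, (ENNReal.ofReal_toReal hSt).symm⟩
  obtain ⟨β, hβ, hβB⟩ : ∃ s : ℝ, 0 < s ∧ B = ENNReal.ofReal s :=
    ⟨B.toReal, ENNReal.toReal_pos hB0 hBt, (ENNReal.ofReal_toReal hBt).symm⟩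
  have hSb : ∀ t, 1 ≤ t → Φ t ^ (1 / r) / t ≤ s := by
    intro t ht1
    have : ENNReal.ofReal (Φ t ^ (1 / r) / t) ≤ S :=
      le_iSup₂ (f := fun (t : ℝ) (_ : 1 ≤ t) => ENNReal.ofReal (Φ t ^ (1 / r) / t)) t ht1
    rw [hsS] at this
    exact (ENNReal.ofReal_le_ofReal_iff hs.le).1 this
  have hNB : N = ENNReal.ofReal (b - a) * ENNReal.ofReal β := by
    rw [← hβB, hB, ← mul_assoc, ENNReal.mul_inv_cancel hL0 hLt, one_mul]
  set K := Φ 1 + 1 with hK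
  have hKp : 0 < K := by linarith
  have hα : 0 < β ^ (1 / r) := by positivity
  refine sInf_le ⟨K * s * β ^ (1 / r), by positivity, ?_, ?_⟩
  · rw [hsS, hβB, ENNReal.ofReal_rpow_of_pos hβ, ENNReal.ofReal_mul (by positivity),
      ENNReal.ofReal_mul hKp.le]
  have hpt : ∀ y, ENNReal.ofReal (Φ (|f y| / (K * s * β ^ (1 / r)))) ≤
      ENNReal.ofReal (Φ 1 / K) + ENNReal.ofReal (1 / (K * β)) * ENNReal.ofReal |(|f y| ^ r)| := by
    intro y
    rw [← ENNReal.ofReal_mul (by positivity), ← ENNReal.ofReal_add (by positivity) (by positivity)]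
    apply ENNReal.ofReal_le_ofReal
    have e1 : |f y| / (K * s * β ^ (1 / r)) = (|f y| / (s * β ^ (1 / r))) / K := by
      field_simp
    rw [e1]
    refine (young_div h (by positivity) (by linarith)).trans ?_
    have h6 := young_bound h hr hs.le hSb (t := |f y| / (s * β ^ (1 / r))) (by positivity)
    have e2 : s ^ r * (|f y| / (s * β ^ (1 / r))) ^ r = |f y| ^ r / β := by
      rw [Real.div_rpow (abs_nonneg _) (by positivity), Real.mul_rpow hs.le hα.le,
        ← Real.rpow_mul hβ.le, one_div_mul_cancel hr0.ne', Real.rpow_one]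
      have : 0 < s ^ r := by positivity
      field_simp
    rw [e2] at h6
    rw [abs_of_nonneg (by positivity : 0 ≤ |f y| ^ r)]
    calc _ ≤ (Φ 1 + |f y| ^ r / β) / K := by gcongr
      _ = _ := by field_simp
  calc _ ≤ ∫⁻ y in Ioo a b, (ENNReal.ofReal (Φ 1 / K) +
          ENNReal.ofReal (1 / (K * β)) * ENNReal.ofReal |(|f y| ^ r)|) := lintegral_mono hpt
    _ = ENNReal.ofReal (Φ 1 / K) * ENNReal.ofReal (b - a) + ENNReal.ofReal (1 / (K * β)) * N := by
        rw [lintegral_add_left measurable_const, lintegral_const_mul' _ _ ENNReal.ofReal_ne_top]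
        simp [hN]
    _ = ENNReal.ofReal (b - a) := by
        rw [hNB, ← ENNReal.ofReal_mul (by positivity), ← ENNReal.ofReal_mul (by positivity),
          ← ENNReal.ofReal_mul (by positivity), ← ENNReal.ofReal_add (by positivity) (by positivity)]
        congr 1
        field_simp
        rw [hK]
    _ ≤ _ := le_rfl

/-- **inequality (4.2).** For a Young function `Φ` there is
`c > 0`, depending only on `Φ` and not on `r`, such that for all `r ∈ (1,2)`,
all locally integrable `f` and all `x`:
`M_Φ f(x) ≤ c (sup_{t ≥ 1} Φ(t)^{1/r}/t) M_r f(x)`. -/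
theorem statement12 (Φ : ℝ → ℝ) (hΦ : IsYoung Φ) :
    ∃ c : ℝ, 0 < c ∧ ∀ r : ℝ, 1 < r → r < 2 →
      ∀ f : ℝ → ℝ, LocallyIntegrable f volume → ∀ x : ℝ,
        MOrlicz Φ f x
          ≤ ENNReal.ofReal c *
              (⨆ (t : ℝ) (_ : 1 ≤ t), ENNReal.ofReal (Φ t ^ (1 / r) / t)) *
              Mr r f x := by
  refine ⟨Φ 1 + 1, by linarith [young_nonneg hΦ zero_le_one], ?_⟩
  intro r hr _ f hf x
  unfold MOrlicz
  refine iSup_le fun a => iSup_le fun b => iSup_le fun hab => iSup_le fun hx => ?_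
  refine (interval_bound hΦ hr hf hab).trans ?_
  unfold Mr
  gcongr
  unfold HLMax
  exact le_iSup_of_le a (le_iSup_of_le b (le_iSup_of_le hab (le_iSup_of_le hx le_rfl)))

end RT

end
end

section
/- Let φ : (1,∞) → (0,∞) be an increasing function with lim_{t→∞} φ(t)/log t = 0. Then for every constant c > 0 there exist r ∈ (1,2), a weight w, a function f with ∫_ℝ |f| M_r w dx < ∞, and λ > 0 such that λ·w({x ∈ ℝ : |Hf(x)| > λ}) > c·φ(r')·∫_ℝ |f| M_r w dx, where r' = r/(r−1). (That is, the factor log(r') in the known inequality λ w({|Hf|>λ}) ≤ c log(r') ‖f‖_{L^1(M_r w)} cannot be replaced by any φ(r') growing more slowly than log(r').) -/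
open MeasureTheory Set Filter Topology
open scoped ENNReal

noncomputable section

namespace RT

/-! ### The construction -/

/-- Indices of the surviving cells of level `l` (base `2K`, all digits `< K`). -/
def GG (K : ℕ) : ℕ → Finset ℕ
  | 0 => {0}
  | l + 1 => ((GG K l) ×ˢ Finset.range K).image (fun p => 2 * K * p.1 + p.2)

lemma mul_add_div_aux (K q j : ℕ) (hj : j < 2 * K) : (2 * K * q + j) / (2 * K) = q := by
  rw [Nat.mul_add_div (by omega), Nat.div_eq_of_lt hj, add_zero]

lemma mul_add_mod_aux (K q j : ℕ) (hj : j < 2 * K) : (2 * K * q + j) % (2 * K) = j := by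
  rw [Nat.mul_add_mod, Nat.mod_eq_of_lt hj]

lemma mem_GG_succ {K l p : ℕ} :
    p ∈ GG K (l + 1) ↔ p / (2 * K) ∈ GG K l ∧ p % (2 * K) < K := by
  simp only [GG, Finset.mem_image, Finset.mem_product, Finset.mem_range, Prod.exists]
  constructor
  · rintro ⟨q, j, ⟨hq, hj⟩, rfl⟩
    rw [mul_add_div_aux K q j (by omega), mul_add_mod_aux K q j (by omega)]
    exact ⟨hq, hj⟩
  · rintro ⟨h1, h2⟩
    exact ⟨_, _, ⟨h1, h2⟩, Nat.div_add_mod p (2 * K)⟩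

lemma sum_GG_succ (K l : ℕ) (F : ℕ → ℝ) :
    ∑ p ∈ GG K (l + 1), F p = ∑ q ∈ GG K l, ∑ j ∈ Finset.range K, F (2 * K * q + j) := by
  rw [← Finset.sum_product', GG, Finset.sum_image]
  rintro ⟨q, j⟩ h ⟨q', j'⟩ h' he
  simp only [Finset.coe_product, Set.mem_prod, Finset.mem_coe, Finset.mem_range] at h h' he
  have h1 := mul_add_div_aux K q j (by omega)
  have h2 := mul_add_mod_aux K q j (by omega)
  rw [he, mul_add_div_aux K q' j' (by omega)] at h1
  rw [he, mul_add_mod_aux K q' j' (by omega)] at h2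
  simp [h1, h2]

lemma card_GG (K l : ℕ) : ((GG K l).card : ℝ) = (K : ℝ) ^ l := by
  induction l with
  | zero => simp [GG]
  | succ l ih =>
    have := sum_GG_succ K l (fun _ => 1)
    simp only [Finset.sum_const, Finset.card_range, nsmul_eq_mul, mul_one] at this
    rw [this, ih, pow_succ]

lemma div_mem_GG {K : ℕ} (n m p : ℕ) (h : p ∈ GG K (m + n)) : p / (2 * K) ^ n ∈ GG K m := by
  induction n generalizing p with
  | zero => simpa using h
  | succ n ih =>
    rw [pow_succ', ← Nat.div_div_eq_div_mul]
    exact ih _ (mem_GG_succ.1 h).1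

lemma card_sub (K n m q : ℕ) :
    ((GG K (m + n)).filter (fun p => p / (2 * K) ^ n = q)).card ≤ K ^ n := by
  induction n with
  | zero =>
    simp only [pow_zero, Nat.div_one]
    apply Finset.card_le_one.2
    intro a ha b hb
    simp only [Finset.mem_filter] at ha hb
    omega
  | succ n ih =>
    have : ((GG K (m + (n + 1))).filter (fun p => p / (2 * K) ^ (n + 1) = q)).card ≤
        (((GG K (m + n)).filter (fun p => p / (2 * K) ^ n = q)) ×ˢ Finset.range K).card := by
      apply Finset.card_le_card_of_injOn (fun p => (p / (2 * K), p % (2 * K)))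
      · intro p hp
        simp only [Finset.coe_filter, Set.mem_ofPred_eq] at hp
        have h := mem_GG_succ.1 hp.1
        simp only [Finset.coe_product, Set.mem_prod, Finset.mem_coe, Finset.mem_filter,
          Finset.mem_range]
        refine ⟨⟨h.1, ?_⟩, h.2⟩
        rw [Nat.div_div_eq_div_mul, ← pow_succ']
        exact hp.2
      · intro a _ b _ hab
        simp only [Prod.mk.injEq] at hab
        rw [← Nat.div_add_mod a (2 * K), ← Nat.div_add_mod b (2 * K), hab.1, hab.2]
    refine this.trans ?_
    rw [Finset.card_product, Finset.card_range, pow_succ]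
    exact Nat.mul_le_mul_right _ ih

/-- Grid cell. -/
def cl (K m q : ℕ) : Set ℝ :=
  Ico ((q : ℝ) / (2 * K : ℝ) ^ m) (((q : ℝ) + 1) / (2 * K : ℝ) ^ m)

lemma mem_cl {K m q : ℕ} (hK : 0 < K) {x : ℝ} :
    x ∈ cl K m q ↔ 0 ≤ x ∧ ⌊(2 * K : ℝ) ^ m * x⌋₊ = q := by
  have hB : (0 : ℝ) < (2 * K : ℝ) ^ m := by positivity
  rw [cl, mem_Ico, div_le_iff₀ hB, lt_div_iff₀ hB, mul_comm x]
  constructor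
  · rintro ⟨h1, h2⟩
    have h0 : 0 ≤ (2 * K : ℝ) ^ m * x := le_trans (by positivity) h1
    refine ⟨(mul_nonneg_iff_of_pos_left hB).1 h0, (Nat.floor_eq_iff h0).2 ⟨h1, h2⟩⟩
  · rintro ⟨h0, h⟩
    exact (Nat.floor_eq_iff (by positivity)).1 h

lemma volume_cl (K m q : ℕ) : volume (cl K m q) = ENNReal.ofReal (1 / (2 * K : ℝ) ^ m) := by
  rw [cl, Real.volume_Ico]
  congr 1
  ring

lemma floor_div_aux {K : ℕ} (hK : 0 < K) (n m : ℕ) (x : ℝ) :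
    ⌊(2 * K : ℝ) ^ m * x⌋₊ = ⌊(2 * K : ℝ) ^ (m + n) * x⌋₊ / (2 * K) ^ n := by
  rw [← Nat.floor_div_natCast]
  congr 1
  have hK' : (K : ℝ) ≠ 0 := by positivity
  push_cast
  rw [pow_add]
  field_simp

/-- The support of the weight. -/
def CC (K N : ℕ) : Set ℝ := {x | 0 ≤ x ∧ ⌊(2 * K : ℝ) ^ N * x⌋₊ ∈ GG K N}

lemma CC_mem {K N m : ℕ} (hK : 0 < K) (hm : m ≤ N) {x : ℝ} (hx : x ∈ CC K N) :
    ⌊(2 * K : ℝ) ^ m * x⌋₊ ∈ GG K m := by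
  obtain ⟨n, rfl⟩ := Nat.exists_eq_add_of_le hm
  rw [floor_div_aux hK n m]
  exact div_mem_GG _ _ _ hx.2

lemma CC_eq {K N : ℕ} (hK : 0 < K) : CC K N = ⋃ p ∈ GG K N, cl K N p := by
  ext x
  simp only [CC, mem_ofPred_eq, mem_iUnion, mem_cl hK, exists_prop]
  aesop

lemma measurableSet_CC {K N : ℕ} (hK : 0 < K) : MeasurableSet (CC K N) := by
  rw [CC_eq hK]
  exact Finset.measurableSet_biUnion _ fun _ _ => measurableSet_Ico

/-- The weight. -/
def ww (K N : ℕ) : ℝ → ℝ := (CC K N).indicator (fun _ => (2 : ℝ) ^ N)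

/-- The function. -/
def ff (K N : ℕ) (x : ℝ) : ℝ :=
  ∑ l ∈ Finset.range N, ∑ q ∈ GG K l,
    ((cl K (l + 1) (2 * K * q + (K + 1))).indicator (fun _ => (1 : ℝ)) x -
      (cl K (l + 1) (2 * K * q + (2 * K - 2))).indicator (fun _ => (1 : ℝ)) x)

/-! ### Hilbert transform off the support -/

/-- `f` vanishes near `x`, and the integral is `v`. -/
def HasH (f : ℝ → ℝ) (x v : ℝ) : Prop :=
  (∃ ε > 0, ∀ y, |x - y| ≤ ε → f y = 0) ∧ Integrable (fun y => f y / (x - y)) ∧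
    ∫ y, f y / (x - y) = v

lemma HasH.hil {f : ℝ → ℝ} {x v : ℝ} (h : HasH f x v) : Hil f x = v := by
  obtain ⟨⟨ε, hε, h0⟩, -, rfl⟩ := h
  apply Tendsto.limUnder_eq
  apply tendsto_const_nhds.congr'
  filter_upwards [Ioo_mem_nhdsGT hε] with e he
  symm
  apply setIntegral_eq_integral_of_forall_compl_eq_zero
  intro y hy
  simp only [mem_ofPred_eq, not_lt] at hy
  rw [h0 y (hy.trans he.2.le), zero_div]

lemma HasH.zero (x : ℝ) : HasH (fun _ => 0) x 0 := by
  refine ⟨⟨1, one_pos, fun _ _ => rfl⟩, ?_, ?_⟩ <;> simp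

lemma HasH.add {f g : ℝ → ℝ} {x v u : ℝ} (h : HasH f x v) (h' : HasH g x u) :
    HasH (fun y => f y + g y) x (v + u) := by
  obtain ⟨⟨ε, hε, h0⟩, h1, rfl⟩ := h
  obtain ⟨⟨ε', hε', h0'⟩, h1', rfl⟩ := h'
  refine ⟨⟨min ε ε', lt_min hε hε', fun y hy => ?_⟩, ?_, ?_⟩
  · simp [h0 y (hy.trans (min_le_left _ _)), h0' y (hy.trans (min_le_right _ _))]
  · simp only [add_div]
    exact h1.add h1'
  · simp only [add_div]
    exact integral_add h1 h1'

lemma HasH.sub {f g : ℝ → ℝ} {x v u : ℝ} (h : HasH f x v) (h' : HasH g x u) :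
    HasH (fun y => f y - g y) x (v - u) := by
  obtain ⟨⟨ε, hε, h0⟩, h1, rfl⟩ := h
  obtain ⟨⟨ε', hε', h0'⟩, h1', rfl⟩ := h'
  refine ⟨⟨min ε ε', lt_min hε hε', fun y hy => ?_⟩, ?_, ?_⟩
  · simp [h0 y (hy.trans (min_le_left _ _)), h0' y (hy.trans (min_le_right _ _))]
  · simp only [sub_div]
    exact h1.sub h1'
  · simp only [sub_div]
    exact integral_sub h1 h1'

lemma HasH.sum {ι : Type*} (s : Finset ι) (F : ι → ℝ → ℝ) (x : ℝ) (V : ι → ℝ)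
    (h : ∀ i ∈ s, HasH (F i) x (V i)) : HasH (fun y => ∑ i ∈ s, F i y) x (∑ i ∈ s, V i) := by
  classical
  induction s using Finset.induction_on with
  | empty => simpa using HasH.zero x
  | insert a s ha ih =>
    simp only [Finset.sum_insert ha]
    exact (h a (Finset.mem_insert_self _ _)).add
      (ih fun i hi => h i (Finset.mem_insert_of_mem hi))

lemma hasH_Ico (x c d : ℝ) (hcd : c < d) (hx : x < c ∨ d < x) :
    ∃ v, HasH ((Ico c d).indicator (fun _ => (1 : ℝ))) x v ∧
      (d - c) / (x - c) ≤ v ∧ v ≤ (d - c) / (x - d) := by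
  have heq : (fun y => (Ico c d).indicator (fun _ => (1 : ℝ)) y / (x - y)) =
      (Ico c d).indicator (fun y => 1 / (x - y)) := by
    ext y
    by_cases hy : y ∈ Ico c d <;> simp [hy]
  have hlow : ∀ y ∈ Icc c d, 1 / (x - c) ≤ 1 / (x - y) := by
    rintro y ⟨h1, h2⟩
    rcases hx with hx | hx
    · exact one_div_le_one_div_of_neg_of_le (by linarith) (by linarith)
    · exact one_div_le_one_div_of_le (by linarith) (by linarith)
  have hup : ∀ y ∈ Icc c d, 1 / (x - y) ≤ 1 / (x - d) := by
    rintro y ⟨h1, h2⟩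
    rcases hx with hx | hx
    · exact one_div_le_one_div_of_neg_of_le (by linarith) (by linarith)
    · exact one_div_le_one_div_of_le (by linarith) (by linarith)
  have hcont : ContinuousOn (fun y => 1 / (x - y)) (Icc c d) := by
    apply ContinuousOn.div continuousOn_const (by fun_prop)
    rintro y ⟨h1, h2⟩ h
    rcases hx with hx | hx <;> linarith
  have hint : IntegrableOn (fun y => 1 / (x - y)) (Ico c d) :=
    (hcont.integrableOn_Icc).mono_set Ico_subset_Icc_self
  have hvol : volume (Ico c d) ≠ ⊤ := by simp
  refine ⟨_, ⟨?_, ?_, rfl⟩, ?_, ?_⟩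
  · rcases hx with hx | hx
    · refine ⟨(c - x) / 2, by linarith, fun y hy => ?_⟩
      have : y ∉ Ico c d := fun h => by
        have := (abs_le.1 hy).1
        linarith [h.1]
      simp [this]
    · refine ⟨(x - d) / 2, by linarith, fun y hy => ?_⟩
      have : y ∉ Ico c d := fun h => by
        have := (abs_le.1 hy).2
        linarith [h.2]
      simp [this]
  · rw [heq, integrable_indicator_iff measurableSet_Ico]
    exact hint
  · rw [heq, integral_indicator measurableSet_Ico]
    have := setIntegral_mono_on (integrableOn_const hvol) hint measurableSet_Ico
      (fun y hy => hlow y (Ico_subset_Icc_self hy))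
    rw [setIntegral_const, Measure.real, Real.volume_Ico,
      ENNReal.toReal_ofReal (by linarith), smul_eq_mul] at this
    calc _ = _ := by ring
      _ ≤ _ := this
  · rw [heq, integral_indicator measurableSet_Ico]
    have := setIntegral_mono_on hint (integrableOn_const hvol) measurableSet_Ico
      (fun y hy => hup y (Ico_subset_Icc_self hy))
    rw [setIntegral_const, Measure.real, Real.volume_Ico,
      ENNReal.toReal_ofReal (by linarith), smul_eq_mul] at this
    calc _ ≤ _ := this
      _ = _ := by ring

lemma hasH_cl {K m q : ℕ} (hK : 0 < K) {x : ℝ}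
    (hx : (2 * K : ℝ) ^ m * x < q ∨ (q : ℝ) + 1 < (2 * K : ℝ) ^ m * x) :
    ∃ v, HasH ((cl K m q).indicator (fun _ => (1 : ℝ))) x v ∧
      1 / ((2 * K : ℝ) ^ m * x - q) ≤ v ∧ v ≤ 1 / ((2 * K : ℝ) ^ m * x - q - 1) := by
  have hB : (0 : ℝ) < (2 * K : ℝ) ^ m := by positivity
  obtain ⟨v, h1, h2, h3⟩ := hasH_Ico x ((q : ℝ) / (2 * K : ℝ) ^ m)
    (((q : ℝ) + 1) / (2 * K : ℝ) ^ m) (by gcongr; linarith) (by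
      rw [lt_div_iff₀ hB, div_lt_iff₀ hB, mul_comm x]; exact hx)
  set b := (2 * K : ℝ) ^ m
  refine ⟨v, h1, ?_, ?_⟩
  · convert h2 using 1
    have h4 : b * x - q ≠ 0 := by rcases hx with h | h <;> intro h' <;> linarith
    have h5 : x - q / b ≠ 0 := by
      intro h'; apply h4; field_simp at h'; linarith
    rw [div_eq_div_iff h4 h5]
    field_simp
    ring
  · convert h3 using 1
    have h4 : b * x - q - 1 ≠ 0 := by rcases hx with h | h <;> intro h' <;> linarith
    have h5 : x - (q + 1) / b ≠ 0 := by
      intro h'; apply h4; field_simp at h'; linarith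
    rw [div_eq_div_iff h4 h5]
    field_simp
    ring

/-- Lower bound for the local contribution. -/
def YY (K j : ℕ) : ℝ := 1 / (4 * ((K : ℝ) + 2 - j))

lemma hasH_pair {K l q : ℕ} (hK : 10 ≤ K) {x : ℝ} {p : ℕ} (hx : 0 ≤ x)
    (hp : ⌊(2 * K : ℝ) ^ (l + 1) * x⌋₊ = p) (hpK : p % (2 * K) < K) :
    ∃ v, HasH (fun y => (cl K (l + 1) (2 * K * q + (K + 1))).indicator (fun _ => (1 : ℝ)) y -
      (cl K (l + 1) (2 * K * q + (2 * K - 2))).indicator (fun _ => (1 : ℝ)) y) x v ∧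
      v ≤ 0 ∧ (q = p / (2 * K) → v ≤ - YY K (p % (2 * K))) := by
  have hK0 : 0 < K := by omega
  have hKr : (10 : ℝ) ≤ K := by exact_mod_cast hK
  set z := (2 * K : ℝ) ^ (l + 1) * x with hz
  have hz0 : 0 ≤ z := by positivity
  obtain ⟨hz1, hz2⟩ := (Nat.floor_eq_iff hz0).1 hp
  set j := p % (2 * K) with hj
  set p' := p / (2 * K) with hp'
  have hpe : p = 2 * K * p' + j := (Nat.div_add_mod p (2 * K)).symm
  have hjr : (j : ℝ) + 1 ≤ K := by exact_mod_cast hpK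
  have hj0 : (0 : ℝ) ≤ j := by positivity
  have hper : (p : ℝ) = 2 * K * p' + j := by exact_mod_cast hpe
  have hcast : ((2 * K * q + (2 * K - 2) : ℕ) : ℝ) = 2 * K * q + (2 * K - 2) := by
    push_cast [Nat.cast_sub (show 2 ≤ 2 * K by omega)]
    ring
  have hcast1 : ((2 * K * q + (K + 1) : ℕ) : ℝ) = 2 * K * q + (K + 1) := by
    push_cast
    ring
  set t := z - 2 * K * q with ht
  have htt : t < K ∨ 2 * (K : ℝ) ≤ t := by
    rcases lt_or_ge q p' with h | h
    · right
      have : (q : ℝ) + 1 ≤ p' := by exact_mod_cast h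
      nlinarith
    · left
      have : (p' : ℝ) ≤ q := by exact_mod_cast h
      nlinarith
  obtain ⟨v1, h1, -, h1u⟩ := hasH_cl (q := 2 * K * q + (K + 1)) (m := l + 1) hK0 (x := x) (by
    rw [hcast1, ← hz]
    rcases htt with h | h
    · left; linarith
    · right; linarith)
  obtain ⟨v2, h2, h2l, -⟩ := hasH_cl (q := 2 * K * q + (2 * K - 2)) (m := l + 1) hK0 (x := x) (by
    rw [hcast, ← hz]
    rcases htt with h | h
    · left; linarith
    · right; linarith)
  rw [hcast1, ← hz] at h1u
  rw [hcast, ← hz] at h2l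
  have e1 : z - (2 * K * q + (K + 1)) - 1 = t - K - 2 := by rw [ht]; ring
  have e2 : z - (2 * K * q + (2 * K - 2)) = t - 2 * K + 2 := by rw [ht]; ring
  rw [e1] at h1u
  rw [e2] at h2l
  refine ⟨v1 - v2, h1.sub h2, ?_, ?_⟩
  · have : 1 / (t - K - 2) ≤ 1 / (t - 2 * K + 2) := by
      rcases htt with h | h
      · exact one_div_le_one_div_of_neg_of_le (by linarith) (by linarith)
      · exact one_div_le_one_div_of_le (by linarith) (by linarith)
    linarith
  · intro hq
    have hqr : (q : ℝ) = p' := by exact_mod_cast hq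
    have ht1 : (j : ℝ) ≤ t := by rw [ht, hqr]; linarith
    have ht2 : t < j + 1 := by rw [ht, hqr]; linarith
    have a1 : 1 / (t - K - 2) ≤ 1 / ((j : ℝ) - K - 2) :=
      one_div_le_one_div_of_neg_of_le (by linarith) (by linarith)
    have a2 : 1 / ((j : ℝ) + 1 - 2 * K + 2) ≤ 1 / (t - 2 * K + 2) :=
      one_div_le_one_div_of_neg_of_le (by linarith) (by linarith)
    have a3 : 1 / ((j : ℝ) - K - 2) - 1 / ((j : ℝ) + 1 - 2 * K + 2) ≤ - YY K j := by
      have e3 : 1 / ((j : ℝ) - K - 2) = - (1 / ((K : ℝ) + 2 - j)) := by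
        rw [← one_div_neg_eq_neg_one_div]; congr 1; ring
      have e4 : 1 / ((j : ℝ) + 1 - 2 * K + 2) = - (1 / (2 * (K : ℝ) - 3 - j)) := by
        rw [← one_div_neg_eq_neg_one_div]; congr 1; ring
      have e5 : 1 / (2 * (K : ℝ) - 3 - j) ≤ 3 / (4 * ((K : ℝ) + 2 - j)) := by
        rw [div_le_div_iff₀ (by linarith) (by linarith)]
        linarith
      have e6 : 1 / ((K : ℝ) + 2 - j) = 1 / (4 * ((K : ℝ) + 2 - j)) +
          3 / (4 * ((K : ℝ) + 2 - j)) := by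
        have : (K : ℝ) + 2 - j ≠ 0 := by intro h; linarith
        field_simp
        norm_num
      rw [e3, e4, YY]
      linarith
    linarith

/-- Accumulated lower bound, in terms of digits. -/
def SS (K : ℕ) : ℕ → ℕ → ℝ
  | 0, _ => 0
  | n + 1, p => SS K n (p / (2 * K)) + YY K (p % (2 * K))

lemma SS_eq {K : ℕ} (hK : 0 < K) (n : ℕ) (x : ℝ) :
    SS K n ⌊(2 * K : ℝ) ^ n * x⌋₊ =
      ∑ l ∈ Finset.range n, YY K (⌊(2 * K : ℝ) ^ (l + 1) * x⌋₊ % (2 * K)) := by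
  induction n with
  | zero => simp [SS]
  | succ n ih =>
    rw [Finset.sum_range_succ, ← ih, SS, floor_div_aux hK 1 n x, pow_one]

lemma hil_le {K N : ℕ} (hK : 10 ≤ K) {x : ℝ} (hx : x ∈ CC K N) :
    Hil (ff K N) x ≤ - SS K N ⌊(2 * K : ℝ) ^ N * x⌋₊ := by
  have hK0 : 0 < K := by omega
  have key : ∀ l q : ℕ, ∃ v, l ∈ Finset.range N → 
     (HasH (fun y => (cl K (l + 1) (2 * K * q + (K + 1))).indicator (fun _ => (1 : ℝ)) y -
      (cl K (l + 1) (2 * K * q + (2 * K - 2))).indicator (fun _ => (1 : ℝ)) y) x v ∧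
      v ≤ 0 ∧ (q = ⌊(2 * K : ℝ) ^ (l + 1) * x⌋₊ / (2 * K) →
        v ≤ - YY K (⌊(2 * K : ℝ) ^ (l + 1) * x⌋₊ % (2 * K)))) := by
    intro l q
    by_cases hl : l ∈ Finset.range N
    · have hm := CC_mem hK0 (m := l + 1) (by simpa using hl) hx
      obtain ⟨v, hv⟩ := hasH_pair (q := q) hK hx.1 rfl (mem_GG_succ.1 hm).2
      exact ⟨v, fun _ => hv⟩
    · exact ⟨0, fun h => absurd h hl⟩
  choose V hV using key
  have hH : HasH (ff K N) x (∑ l ∈ Finset.range N, ∑ q ∈ GG K l, V l q) := by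
    apply HasH.sum
    intro l hl
    apply HasH.sum
    intro q _
    exact (hV l q hl).1
  rw [hH.hil, SS_eq hK0, ← Finset.sum_neg_distrib]
  apply Finset.sum_le_sum
  intro l hl
  have hm := CC_mem hK0 (m := l + 1) (by simpa using hl) hx
  have hq := (mem_GG_succ.1 hm).1
  rw [← Finset.add_sum_erase _ _ hq]
  have h1 := (hV l _ hl).2.2 rfl
  have h2 : ∑ q ∈ (GG K l).erase (⌊(2 * K : ℝ) ^ (l + 1) * x⌋₊ / (2 * K)), V l q ≤ 0 :=
    Finset.sum_nonpos fun q _ => (hV l q hl).2.1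
  linarith

/-! ### Chernoff -/

/-- Sum of the local bounds. -/
def TT (K : ℕ) : ℝ := ∑ j ∈ Finset.range K, YY K j

lemma TT_ge (K : ℕ) : (Real.log (K + 3) - Real.log 3) / 4 ≤ TT K := by
  have h1 : TT K = (∑ j ∈ Finset.range K, 1 / ((j : ℝ) + 3)) / 4 := by
    rw [← Finset.sum_range_reflect, TT, Finset.sum_div]
    apply Finset.sum_congr rfl
    intro j hj
    have hj' := Finset.mem_range.1 hj
    rw [YY, Nat.sub_sub, Nat.cast_sub (by omega), div_div]
    push_cast
    congr 1
    ring
  rw [h1]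
  gcongr
  clear h1
  induction K with
  | zero => simp
  | succ n ih =>
    rw [Finset.sum_range_succ]
    have h0 : (0 : ℝ) < (n : ℝ) + 3 := by positivity
    have : Real.log ((n + 1 : ℕ) + 3) - Real.log (n + 3) ≤ 1 / ((n : ℝ) + 3) := by
      rw [← Real.log_div (by positivity) (by positivity)]
      refine (Real.log_le_sub_one_of_pos (by positivity)).trans (le_of_eq ?_)
      push_cast
      field_simp
      ring
    linarith

lemma exp_sum (K n : ℕ) :
    ∑ p ∈ GG K n, Real.exp (- SS K n p) = (∑ j ∈ Finset.range K, Real.exp (- YY K j)) ^ n := by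
  induction n with
  | zero => simp [GG, SS]
  | succ n ih =>
    rw [sum_GG_succ, pow_succ, ← ih, Finset.sum_mul_sum]
    apply Finset.sum_congr rfl
    intro q _
    apply Finset.sum_congr rfl
    intro j hj
    have hj' := Finset.mem_range.1 hj
    rw [SS, mul_add_div_aux K q j (by omega), mul_add_mod_aux K q j (by omega), neg_add,
      Real.exp_add]

lemma exp_bd {y : ℝ} (h0 : 0 ≤ y) (h1 : y ≤ 1) : Real.exp (-y) ≤ 1 - y / 2 := by
  have h2 : 1 + y ≤ Real.exp y := by linarith [Real.add_one_le_exp y]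
  rw [Real.exp_neg]
  have h3 : (Real.exp y)⁻¹ ≤ (1 + y)⁻¹ := inv_anti₀ (by linarith) h2
  refine h3.trans ?_
  rw [inv_le_iff_one_le_mul₀ (by linarith)]
  nlinarith

lemma chernoff {K : ℕ} (hK : 0 < K) (hT : 4 ≤ TT K) :
    (K : ℝ) ^ K / 2 ≤ ((GG K K).filter (fun p => TT K / 4 < SS K K p)).card := by
  have hKr : (0 : ℝ) < K := by exact_mod_cast hK
  have h1 : ∑ j ∈ Finset.range K, Real.exp (- YY K j) ≤ K - TT K / 2 := by
    have : ∑ j ∈ Finset.range K, Real.exp (- YY K j) ≤ ∑ j ∈ Finset.range K, (1 - YY K j / 2) := by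
      apply Finset.sum_le_sum
      intro j hj
      have hj' : (j : ℝ) + 1 ≤ K := by exact_mod_cast Finset.mem_range.1 hj
      apply exp_bd
      · rw [YY]
        apply div_nonneg <;> linarith
      · rw [YY, div_le_one (by linarith)]
        linarith
    rwa [Finset.sum_sub_distrib, ← Finset.sum_div, Finset.sum_const, Finset.card_range,
      nsmul_eq_mul, mul_one] at this
  have h2 : ∑ p ∈ GG K K, Real.exp (- SS K K p) ≤ (K : ℝ) ^ K * Real.exp (- (TT K / 2)) := by
    rw [exp_sum]
    have h3 : ∑ j ∈ Finset.range K, Real.exp (- YY K j) ≤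
        K * Real.exp (- (TT K / 2) / K) := by
      refine h1.trans ?_
      have := Real.add_one_le_exp (- (TT K / 2) / K)
      calc (K : ℝ) - TT K / 2 = K * (- (TT K / 2) / K + 1) := by field_simp; ring
        _ ≤ _ := by gcongr
    calc _ ≤ (K * Real.exp (- (TT K / 2) / K)) ^ K := by
          gcongr
          
      _ = _ := by
          rw [mul_pow, ← Real.exp_nat_mul]
          congr 2
          field_simp
  have h4 : ((GG K K).filter (fun p => ¬ TT K / 4 < SS K K p)).card * Real.exp (-(TT K / 4)) ≤
      ∑ p ∈ GG K K, Real.exp (- SS K K p) := by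
    rw [← nsmul_eq_mul, ← Finset.sum_const]
    refine le_trans ?_ (Finset.sum_le_sum_of_subset_of_nonneg (Finset.filter_subset
      (fun p => ¬ TT K / 4 < SS K K p) _) fun _ _ _ => (Real.exp_pos _).le)
    apply Finset.sum_le_sum
    intro p hp
    have := (Finset.mem_filter.1 hp).2
    apply Real.exp_le_exp.2
    linarith
  have h5 := Finset.card_filter_add_card_filter_not (s := GG K K) (fun p => TT K / 4 < SS K K p)
  have h6 : (((GG K K).filter (fun p => TT K / 4 < SS K K p)).card : ℝ) +
      ((GG K K).filter (fun p => ¬ TT K / 4 < SS K K p)).card = (K : ℝ) ^ K := by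
    rw [← card_GG K K, ← h5]
    push_cast
    rfl
  have h7 : (((GG K K).filter (fun p => ¬ TT K / 4 < SS K K p)).card : ℝ) ≤ (K : ℝ) ^ K / 2 := by
    have h8 : Real.exp (-(TT K / 2)) = Real.exp (-(TT K / 4)) * Real.exp (-(TT K / 4)) := by
      rw [← Real.exp_add]; congr 1; ring
    have h9 : Real.exp (-(TT K / 4)) ≤ 1 / 2 := by
      have a : Real.exp (-(TT K / 4)) ≤ Real.exp (-1) := Real.exp_le_exp.2 (by linarith)
      have b := exp_bd zero_le_one le_rfl
      linarith
    have h10 := h4.trans h2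
    rw [h8, ← mul_assoc] at h10
    have h11 := le_of_mul_le_mul_right h10 (Real.exp_pos _)
    have : (0 : ℝ) < (K : ℝ) ^ K := by positivity
    nlinarith
  linarith

/-! ### Maximal function -/

lemma volume_le {K : ℕ} (hK : 0 < K) (m n : ℕ) (a b : ℝ)
    (hab : 1 / (2 * K : ℝ) ^ m ≤ b - a) :
    ENNReal.ofReal ((2 : ℝ) ^ (m + n)) * volume (CC K (m + n) ∩ Ioo a b) ≤
      ENNReal.ofReal (3 * 2 ^ m * (b - a)) := by
  have hKr : (0 : ℝ) < K := by exact_mod_cast hK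
  have hB : (0 : ℝ) < (2 * K : ℝ) ^ m := by positivity
  set s := (GG K (m + n)).filter (fun p => p / (2 * K) ^ n ∈
    Finset.Icc ⌊(2 * K : ℝ) ^ m * a⌋₊ ⌊(2 * K : ℝ) ^ m * b⌋₊) with hs
  have hab' : 1 ≤ (2 * K : ℝ) ^ m * b - (2 * K : ℝ) ^ m * a := by
    rw [div_le_iff₀ hB] at hab
    linarith
  have hsub : CC K (m + n) ∩ Ioo a b ⊆ ⋃ p ∈ s, cl K (m + n) p := by
    rintro y ⟨hy, hya, hyb⟩
    simp only [mem_iUnion, exists_prop]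
    refine ⟨_, ?_, (mem_cl hK).2 ⟨hy.1, rfl⟩⟩
    rw [hs, Finset.mem_filter, ← floor_div_aux hK n m, Finset.mem_Icc]
    refine ⟨hy.2, Nat.floor_mono ?_, Nat.floor_mono ?_⟩ <;> gcongr
  have hcard1 : s.card ≤ K ^ n * (Finset.Icc ⌊(2 * K : ℝ) ^ m * a⌋₊ ⌊(2 * K : ℝ) ^ m * b⌋₊).card := by
    apply Finset.card_le_mul_card_image_of_maps_to (f := fun p => p / (2 * K) ^ n)
    · intro p hp
      exact (Finset.mem_filter.1 hp).2
    · intro q _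
      refine le_trans (Finset.card_le_card ?_) (card_sub K n m q)
      exact Finset.filter_subset_filter _ (Finset.filter_subset _ _)
  have hcard2 : ((Finset.Icc ⌊(2 * K : ℝ) ^ m * a⌋₊ ⌊(2 * K : ℝ) ^ m * b⌋₊).card : ℝ) ≤
      3 * ((2 * K : ℝ) ^ m * b - (2 * K : ℝ) ^ m * a) := by
    have hle : ⌊(2 * K : ℝ) ^ m * a⌋₊ ≤ ⌊(2 * K : ℝ) ^ m * b⌋₊ := Nat.floor_mono (by linarith)
    rw [Nat.card_Icc, Nat.cast_sub (by omega)]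
    push_cast
    have h1 := Nat.lt_floor_add_one ((2 * K : ℝ) ^ m * a)
    rcases le_total 0 ((2 * K : ℝ) ^ m * b) with h | h
    · have h2 := Nat.floor_le h
      linarith
    · rw [Nat.floor_of_nonpos h, Nat.floor_of_nonpos (by linarith)]
      push_cast
      linarith
  have hvol : volume (CC K (m + n) ∩ Ioo a b) ≤
      ENNReal.ofReal (s.card * (1 / (2 * K : ℝ) ^ (m + n))) := by
    refine (measure_mono hsub).trans ((measure_biUnion_finset_le _ _).trans ?_)
    simp only [volume_cl, Finset.sum_const, nsmul_eq_mul]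
    rw [ENNReal.ofReal_mul (by positivity), ENNReal.ofReal_natCast]
  refine (mul_le_mul_right hvol _).trans ?_
  rw [← ENNReal.ofReal_mul (by positivity)]
  apply ENNReal.ofReal_le_ofReal
  have hcard : (s.card : ℝ) ≤ (K : ℝ) ^ n * (3 * ((2 * K : ℝ) ^ m * b - (2 * K : ℝ) ^ m * a)) := by
    calc (s.card : ℝ) ≤ (K : ℝ) ^ n *
          (Finset.Icc ⌊(2 * K : ℝ) ^ m * a⌋₊ ⌊(2 * K : ℝ) ^ m * b⌋₊).card := by
            exact_mod_cast hcard1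
      _ ≤ _ := by gcongr
  calc (2 : ℝ) ^ (m + n) * (s.card * (1 / (2 * K : ℝ) ^ (m + n))) ≤
      (2 : ℝ) ^ (m + n) * (((K : ℝ) ^ n * (3 * ((2 * K : ℝ) ^ m * b - (2 * K : ℝ) ^ m * a))) *
        (1 / (2 * K : ℝ) ^ (m + n))) := by gcongr
    _ = _ := by
      simp only [mul_pow, pow_add]
      field_simp

lemma not_near {K N l q i : ℕ} (hK : 0 < K) (hl : l < N) (hi1 : K + 1 ≤ i) (hi2 : i + 2 ≤ 2 * K)
    {x y : ℝ} (hx : x ∈ cl K (l + 1) (2 * K * q + i)) (hy : y ∈ CC K N)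
    (hxy : |y - x| < 1 / (2 * K : ℝ) ^ (l + 1)) : False := by
  have hB : (0 : ℝ) < (2 * K : ℝ) ^ (l + 1) := by positivity
  have hm := CC_mem hK (m := l + 1) (by omega) hy
  obtain ⟨hx0, hx1⟩ := (mem_cl hK).1 hx
  obtain ⟨hx2, hx3⟩ := (Nat.floor_eq_iff (by positivity)).1 hx1
  set p := ⌊(2 * K : ℝ) ^ (l + 1) * y⌋₊ with hp
  have hy0 := hy.1
  obtain ⟨hy2, hy3⟩ := (Nat.floor_eq_iff (by positivity)).1 hp.symm
  rw [abs_lt, lt_div_iff₀ hB] at hxy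
  have hxy1 := hxy.1
  rw [← neg_div, div_lt_iff₀ hB] at hxy1
  have h1 : ((2 * K * q + i : ℕ) : ℝ) < ((p + 2 : ℕ) : ℝ) := by push_cast at *; nlinarith
  have h2 : (p : ℝ) < ((2 * K * q + i + 2 : ℕ) : ℝ) := by push_cast at *; nlinarith
  have h1' := Nat.cast_lt.1 h1
  have h2' := Nat.cast_lt.1 h2
  obtain ⟨i', hi'⟩ : ∃ i', p = 2 * K * q + i' := ⟨p - 2 * K * q, by omega⟩
  have h3 := (mem_GG_succ.1 hm).2
  rw [hi', mul_add_mod_aux K q i' (by omega)] at h3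
  omega

lemma ww_pow {K N : ℕ} (hN : 0 < N) (y : ℝ) :
    |(|ww K N y| ^ (1 + 1 / (N : ℝ)))| = 2 * ww K N y := by
  have hNr : (N : ℝ) ≠ 0 := by positivity
  rw [ww]
  by_cases hy : y ∈ CC K N
  · simp only [hy, indicator_of_mem]
    rw [abs_of_nonneg (by positivity), abs_of_nonneg (by positivity),
      Real.rpow_add (by positivity), Real.rpow_one, ← Real.rpow_natCast, ← Real.rpow_mul (by norm_num),
      mul_one_div_cancel hNr, Real.rpow_one, mul_comm]
  · have : (1 + 1 / (N : ℝ)) ≠ 0 := by positivity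
    simp only [hy, not_false_eq_true, indicator_of_notMem, abs_zero, mul_zero]
    rw [Real.zero_rpow this, abs_zero]

lemma lint_ww {K N : ℕ} (hK : 0 < K) (s : Set ℝ) :
    ∫⁻ y in s, ENNReal.ofReal (ww K N y) = ENNReal.ofReal (2 ^ N) * volume (CC K N ∩ s) := by
  have : (fun y => ENNReal.ofReal (ww K N y)) =
      (CC K N).indicator (fun _ => ENNReal.ofReal (2 ^ N)) := by
    ext y
    by_cases hy : y ∈ CC K N <;> simp [ww, hy]
  rw [this, lintegral_indicator (measurableSet_CC hK), setLIntegral_const,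
    Measure.restrict_apply (measurableSet_CC hK)]

lemma Mr_le {K N l q i : ℕ} (hK : 0 < K) (hl : l < N) (hi1 : K + 1 ≤ i) (hi2 : i + 2 ≤ 2 * K)
    {x : ℝ} (hx : x ∈ cl K (l + 1) (2 * K * q + i)) :
    Mr (1 + 1 / (N : ℝ)) (ww K N) x ≤ ENNReal.ofReal (12 * 2 ^ l) := by
  have hN : 0 < N := by omega
  have hmax : HLMax (fun y => |ww K N y| ^ (1 + 1 / (N : ℝ))) x ≤ ENNReal.ofReal (12 * 2 ^ l) := by
    rw [HLMax]
    refine iSup_le fun a => iSup_le fun b => iSup_le fun hab => iSup_le fun hxab => ?_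
    have h1 : ∫⁻ y in Ioo a b, ENNReal.ofReal |(|ww K N y| ^ (1 + 1 / (N : ℝ)))| =
        ENNReal.ofReal 2 * (ENNReal.ofReal (2 ^ N) * volume (CC K N ∩ Ioo a b)) := by
      rw [← lint_ww hK, ← lintegral_const_mul' _ _ ENNReal.ofReal_ne_top]
      apply lintegral_congr
      intro y
      rw [ww_pow hN, ENNReal.ofReal_mul (by norm_num)]
    rw [h1]
    rcases lt_or_ge (b - a) (1 / (2 * K : ℝ) ^ (l + 1)) with h | h
    · have : CC K N ∩ Ioo a b = ∅ := by
        rw [eq_empty_iff_forall_notMem]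
        rintro y ⟨hy, hy1, hy2⟩
        refine not_near hK hl hi1 hi2 hx hy ?_
        rw [abs_lt]
        constructor <;> linarith [hxab.1, hxab.2]
      simp [this]
    · obtain ⟨n, rfl⟩ := Nat.exists_eq_add_of_le (show l + 1 ≤ N from hl)
      have h2 := volume_le hK (l + 1) n a b h
      have h0 : 0 < b - a := by linarith
      calc _ ≤ (ENNReal.ofReal (b - a))⁻¹ * (ENNReal.ofReal 2 *
            ENNReal.ofReal (3 * 2 ^ (l + 1) * (b - a))) := by gcongr
        _ = _ := by
          rw [← ENNReal.ofReal_inv_of_pos h0, ← ENNReal.ofReal_mul (by norm_num),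
            ← ENNReal.ofReal_mul (by positivity)]
          congr 1
          field_simp
          ring
  rw [Mr]
  have hr : 0 ≤ 1 / (1 + 1 / (N : ℝ)) := by positivity
  refine (ENNReal.rpow_le_rpow hmax hr).trans ?_
  have h3 : (1 : ℝ≥0∞) ≤ ENNReal.ofReal (12 * 2 ^ l) := by
    rw [← ENNReal.ofReal_one]
    apply ENNReal.ofReal_le_ofReal
    have : (1 : ℝ) ≤ 2 ^ l := one_le_pow₀ (by norm_num)
    linarith
  calc _ ≤ ENNReal.ofReal (12 * 2 ^ l) ^ (1 : ℝ) := by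
        apply ENNReal.rpow_le_rpow_of_exponent_le h3
        rw [div_le_one (by positivity)]
        have : 0 ≤ 1 / (N : ℝ) := by positivity
        linarith
    _ = _ := ENNReal.rpow_one _

lemma int_f {K N : ℕ} (hK : 3 ≤ K) :
    ∫⁻ x, ENNReal.ofReal |ff K N x| * Mr (1 + 1 / (N : ℝ)) (ww K N) x ≤
      ENNReal.ofReal (12 * N / K) := by
  have hK0 : 0 < K := by omega
  have hKr : (0 : ℝ) < K := by exact_mod_cast hK0
  have hcell : ∀ l q i x, l < N → K + 1 ≤ i → i + 2 ≤ 2 * K →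
      ‖(cl K (l + 1) (2 * K * q + i)).indicator (fun _ => (1 : ℝ)) x‖ₑ *
        Mr (1 + 1 / (N : ℝ)) (ww K N) x ≤
      (cl K (l + 1) (2 * K * q + i)).indicator (fun _ => ENNReal.ofReal (12 * 2 ^ l)) x := by
    intro l q i x hl h1 h2
    by_cases hx : x ∈ cl K (l + 1) (2 * K * q + i)
    · simpa [hx] using Mr_le hK0 hl h1 h2 hx
    · simp [hx]
  calc _ ≤ ∫⁻ x, ∑ l ∈ Finset.range N, ∑ q ∈ GG K l,
      ((cl K (l + 1) (2 * K * q + (K + 1))).indicator (fun _ => ENNReal.ofReal (12 * 2 ^ l)) x +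
       (cl K (l + 1) (2 * K * q + (2 * K - 2))).indicator
        (fun _ => ENNReal.ofReal (12 * 2 ^ l)) x) := by
        apply lintegral_mono
        intro x
        dsimp only
        rw [← Real.enorm_eq_ofReal_abs, ff]
        refine (mul_le_mul_left (enorm_sum_le _ _) _).trans ?_
        rw [Finset.sum_mul]
        apply Finset.sum_le_sum
        intro l hl
        refine (mul_le_mul_left (enorm_sum_le _ _) _).trans ?_
        rw [Finset.sum_mul]
        apply Finset.sum_le_sum
        intro q _
        refine (mul_le_mul_left enorm_sub_le _).trans ?_
        rw [add_mul]
        have hl' := Finset.mem_range.1 hl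
        exact add_le_add (hcell _ _ _ _ hl' (by omega) (by omega))
          (hcell _ _ _ _ hl' (by omega) (by omega))
    _ = ∑ l ∈ Finset.range N, ∑ q ∈ GG K l,
        ENNReal.ofReal (2 * (12 * 2 ^ l * (1 / (2 * K : ℝ) ^ (l + 1)))) := by
        have hm : ∀ l q, MeasurableSet (cl K l q) := fun _ _ => measurableSet_Ico
        have hm' : ∀ l q (e : ℝ≥0∞), Measurable ((cl K l q).indicator (fun _ => e)) :=
          fun l q e => measurable_const.indicator (hm l q)
        have hm2 : ∀ l q, Measurable (fun x =>
            (cl K (l + 1) (2 * K * q + (K + 1))).indicator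
              (fun _ => ENNReal.ofReal (12 * 2 ^ l)) x +
            (cl K (l + 1) (2 * K * q + (2 * K - 2))).indicator
              (fun _ => ENNReal.ofReal (12 * 2 ^ l)) x) :=
          fun l q => (hm' _ _ _).add (hm' _ _ _)
        rw [lintegral_finsetSum _ (fun l _ => Finset.measurable_fun_sum _ fun q _ => hm2 l q)]
        apply Finset.sum_congr rfl
        intro l _
        rw [lintegral_finsetSum _ (fun q _ => hm2 l q)]
        apply Finset.sum_congr rfl
        intro q _
        rw [lintegral_add_left (hm' _ _ _), lintegral_indicator (hm _ _),
          lintegral_indicator (hm _ _), setLIntegral_const, setLIntegral_const, volume_cl,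
          volume_cl, ← ENNReal.ofReal_mul (by positivity), ← two_mul,
          ENNReal.ofReal_mul (by norm_num) (p := 2)]
        simp
    _ = ∑ l ∈ Finset.range N, ENNReal.ofReal (12 / K) := by
        apply Finset.sum_congr rfl
        intro l _
        rw [Finset.sum_const, nsmul_eq_mul, ← ENNReal.ofReal_natCast,
          ← ENNReal.ofReal_mul (by positivity), card_GG]
        congr 1
        rw [mul_pow]
        field_simp
        ring
    _ = _ := by
        rw [Finset.sum_const, nsmul_eq_mul, Finset.card_range, ← ENNReal.ofReal_natCast,
          ← ENNReal.ofReal_mul (by positivity)]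
        congr 1
        ring

lemma mass_ge {K : ℕ} (hK : 10 ≤ K) (hT : 4 ≤ TT K) :
    ENNReal.ofReal (1 / 2) ≤
      ∫⁻ x in {x : ℝ | TT K / 4 < |Hil (ff K K) x|}, ENNReal.ofReal (ww K K x) := by
  have hK0 : 0 < K := by omega
  have hKr : (0 : ℝ) < K := by exact_mod_cast hK0
  rw [lint_ww hK0]
  set s := (GG K K).filter (fun p => TT K / 4 < SS K K p) with hs
  have hsub : (⋃ p ∈ s, cl K K p) ⊆ CC K K ∩ {x : ℝ | TT K / 4 < |Hil (ff K K) x|} := by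
    intro x hx
    simp only [mem_iUnion, exists_prop] at hx
    obtain ⟨p, hp, hx⟩ := hx
    obtain ⟨hx0, hx1⟩ := (mem_cl hK0).1 hx
    obtain ⟨hp1, hp2⟩ := Finset.mem_filter.1 hp
    have hC : x ∈ CC K K := ⟨hx0, by rw [hx1]; exact hp1⟩
    refine ⟨hC, ?_⟩
    have h := hil_le hK hC
    rw [hx1] at h
    have h' := neg_abs_le (Hil (ff K K) x)
    show TT K / 4 < |Hil (ff K K) x|
    linarith
  have hvol : volume (⋃ p ∈ s, cl K K p) = ENNReal.ofReal (s.card * (1 / (2 * K : ℝ) ^ K)) := by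
    rw [measure_biUnion_finset]
    · simp only [volume_cl, Finset.sum_const, nsmul_eq_mul]
      rw [ENNReal.ofReal_mul (by positivity), ENNReal.ofReal_natCast]
    · intro p _ p' _ hne
      rw [Function.onFun, Set.disjoint_left]
      intro x h1 h2
      exact hne (((mem_cl hK0).1 h1).2.symm.trans ((mem_cl hK0).1 h2).2)
    · intro p _
      exact measurableSet_Ico
  refine le_trans ?_ (mul_le_mul_right (measure_mono hsub) _)
  rw [hvol, ← ENNReal.ofReal_mul (by positivity)]
  apply ENNReal.ofReal_le_ofReal
  have hc := chernoff hK0 hT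
  calc (1 : ℝ) / 2 = 2 ^ K * (((K : ℝ) ^ K / 2) * (1 / (2 * K : ℝ) ^ K)) := by
        rw [mul_pow]
        field_simp
    _ ≤ _ := by gcongr


/-- **Remark 4.2.** If `φ : (1,∞) → (0,∞)` is increasing with
`φ(t)/log t → 0`, then for every `c > 0` there are `r ∈ (1,2)`, a weight `w`,
a function `f` with `∫ |f| M_r w < ∞`, and `λ > 0` such that
`λ w({|Hf| > λ}) > c φ(r') ∫ |f| M_r w`, where `r' = r/(r−1)`. -/
theorem statement13 (φ : ℝ → ℝ)
    (hmono : ∀ s t : ℝ, 1 < s → s ≤ t → φ s ≤ φ t)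
    (hpos : ∀ t : ℝ, 1 < t → 0 < φ t)
    (hlim : Tendsto (fun t => φ t / Real.log t) atTop (𝓝 0))
    (c : ℝ) (hc : 0 < c) :
    ∃ (r : ℝ) (w f : ℝ → ℝ) (lam : ℝ), 1 < r ∧ r < 2 ∧ IsWeight w ∧
      (∫⁻ x, ENNReal.ofReal |f x| * Mr r w x) < ⊤ ∧ 0 < lam ∧
      ENNReal.ofReal (c * φ (r / (r - 1))) *
          (∫⁻ x, ENNReal.ofReal |f x| * Mr r w x)
        < ENNReal.ofReal lam *
            ∫⁻ x in {x : ℝ | lam < |Hil f x|}, ENNReal.ofReal (w x) := by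
  have hlog : Tendsto (fun n : ℕ => Real.log ((n : ℝ) + 1)) atTop atTop :=
    Real.tendsto_log_atTop.comp
      (tendsto_atTop_add_const_right _ _ tendsto_natCast_atTop_atTop)
  have hphi : Tendsto (fun n : ℕ => φ ((n : ℝ) + 1) / Real.log ((n : ℝ) + 1)) atTop (𝓝 0) :=
    hlim.comp (tendsto_atTop_add_const_right _ _ tendsto_natCast_atTop_atTop)
  have hev := (hphi.eventually (gt_mem_nhds (show (0 : ℝ) < 1 / (1000 * c) by positivity))).and
    ((hlog.eventually_ge_atTop 100).and (eventually_ge_atTop 10))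
  obtain ⟨K, hK1, hK2, hK⟩ := hev.exists
  have hK0 : 0 < K := by omega
  have hKr : (10 : ℝ) ≤ K := by exact_mod_cast hK
  have hlog3 : Real.log 3 ≤ 2 := by
    have := Real.log_le_sub_one_of_pos (show (0 : ℝ) < 3 by norm_num)
    linarith
  have hmonolog : Real.log ((K : ℝ) + 1) ≤ Real.log (K + 3) :=
    Real.log_le_log (by linarith) (by linarith)
  have hTge := TT_ge K
  have hT : Real.log ((K : ℝ) + 1) / 5 ≤ TT K := by linarith
  have hT4 : 4 ≤ TT K := by linarith
  have hr : (1 + 1 / (K : ℝ)) / (1 + 1 / (K : ℝ) - 1) = K + 1 := by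
    have : (K : ℝ) ≠ 0 := by positivity
    field_simp
    ring
  have hint : ∫⁻ x, ENNReal.ofReal |ff K K x| * Mr (1 + 1 / (K : ℝ)) (ww K K) x ≤
      ENNReal.ofReal 12 := by
    have h := int_f (K := K) (N := K) (by omega)
    rwa [mul_div_assoc, div_self (by positivity), mul_one] at h
  have hmass := mass_ge hK hT4
  refine ⟨1 + 1 / (K : ℝ), ww K K, ff K K, TT K / 4, ?_, ?_, ⟨?_, ?_⟩,
    hint.trans_lt ENNReal.ofReal_lt_top, by linarith, ?_⟩
  · have : 0 < 1 / (K : ℝ) := by positivity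
    linarith
  · have : 1 / (K : ℝ) < 1 := by rw [div_lt_one (by linarith)]; linarith
    linarith
  · intro x
    exact indicator_nonneg (fun _ _ => by positivity) x
  · exact (locallyIntegrable_const _).indicator (measurableSet_CC hK0)
  · rw [hr]
    have hphi0 : 0 < φ ((K : ℝ) + 1) := hpos _ (by linarith)
    calc _ ≤ ENNReal.ofReal (c * φ ((K : ℝ) + 1)) * ENNReal.ofReal 12 := by gcongr
      _ = ENNReal.ofReal (c * φ ((K : ℝ) + 1) * 12) := by
        rw [← ENNReal.ofReal_mul (by positivity)]
      _ < ENNReal.ofReal (TT K / 4 * (1 / 2)) := by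
        rw [ENNReal.ofReal_lt_ofReal_iff (by linarith)]
        rw [div_lt_div_iff₀ (by linarith) (by positivity)] at hK1
        linarith
      _ = ENNReal.ofReal (TT K / 4) * ENNReal.ofReal (1 / 2) :=
        ENNReal.ofReal_mul (by linarith)
      _ ≤ _ := by gcongr



end RT

end
end

section
/- Let φ : [1,∞) → (0,∞) be a bounded function and define Φ(t) = t·log log(e^e + t)·φ(t) for t ≥ 1. Then for every δ ∈ (0,1) there is a constant c > 0, depending only on δ and on sup φ, such that for every r ∈ (1,2), with r' = r/(r−1): sup_{t ≥ 1} Φ(t)^{1/r}/t ≤ c·( (log r')^{δ/r} + (log r')^{1/r} · sup_{t ≥ exp(exp((log r')^δ))} φ(t)^{1/r} ). -/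
open MeasureTheory Set Filter Topology
open scoped ENNReal

noncomputable section

namespace RT

lemma LL_nonneg (t : ℝ) (ht : 0 ≤ t) :
    0 ≤ Real.log (Real.log (Real.exp (Real.exp 1) + t)) := by
  apply Real.log_nonneg
  rw [Real.le_log_iff_exp_le (by positivity)]
  have h1 : (1:ℝ) ≤ Real.exp 1 := Real.one_le_exp (by norm_num)
  have h2 := Real.exp_le_exp.2 h1
  linarith

lemma LL_mono (t T : ℝ) (ht : 0 ≤ t) (h : t ≤ T) :
    Real.log (Real.log (Real.exp (Real.exp 1) + t)) ≤
      Real.log (Real.log (Real.exp (Real.exp 1) + T)) := by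
  have h1 : (1:ℝ) < Real.exp (Real.exp 1) := Real.one_lt_exp_iff.2 (Real.exp_pos 1)
  apply Real.log_le_log (Real.log_pos (by linarith))
  apply Real.log_le_log (by linarith)
  linarith

lemma LL_le (t : ℝ) (ht : Real.exp 1 ≤ t) :
    Real.log (Real.log (Real.exp (Real.exp 1) + t)) ≤ 2 + Real.log (Real.log t) := by
  have he := Real.exp_one_gt_d9
  have hee : Real.exp 1 + 1 ≤ Real.exp (Real.exp 1) := Real.add_one_le_exp _
  have h1 : (1:ℝ) < Real.exp (Real.exp 1) := by linarith
  have ht0 : 0 < t := by linarith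
  have hu : 1 ≤ Real.log t := by rwa [Real.le_log_iff_exp_le ht0]
  have hA : Real.log (Real.exp (Real.exp 1) + t) ≤ Real.exp 1 + Real.log t := by
    rw [← Real.log_exp (Real.exp 1), ← Real.log_mul (by positivity) (by positivity),
      Real.log_exp]
    apply Real.log_le_log (by positivity)
    nlinarith
  have hB : Real.exp 1 + Real.log t ≤ Real.exp 2 * Real.log t := by
    have : Real.exp 2 = Real.exp 1 * Real.exp 1 := by rw [← Real.exp_add]; norm_num
    rw [this]
    have h3 : Real.exp 1 + 1 ≤ Real.exp 1 * Real.exp 1 := by nlinarith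
    nlinarith
  calc _ ≤ Real.log (Real.exp 2 * Real.log t) :=
        Real.log_le_log (Real.log_pos (by linarith)) (hA.trans hB)
    _ = _ := by rw [Real.log_mul (by positivity) (by positivity), Real.log_exp]

lemma rpow_le_self' (x p : ℝ) (hx : 1 ≤ x) (hp1 : p ≤ 1) : x ^ p ≤ x := by
  simpa using Real.rpow_le_rpow_of_exponent_le hx hp1

/-- Let `φ : [1,∞) → (0,∞)` be bounded (by `B`) and let
`Φ(t) = t log log(e^e + t) φ(t)`. For every `δ ∈ (0,1)` there is `c > 0`,
depending only on `δ` and `B`, such that for every `r ∈ (1,2)` (with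
`r' = r/(r−1)`):
`sup_{t≥1} Φ(t)^{1/r}/t
  ≤ c ((log r')^{δ/r} + (log r')^{1/r} sup_{t ≥ e^{e^{(log r')^δ}}} φ(t)^{1/r})`. -/
theorem statement14 (B δ : ℝ) (hδ0 : 0 < δ) (hδ1 : δ < 1) :
    ∃ c : ℝ, 0 < c ∧ ∀ φ : ℝ → ℝ,
      (∀ t : ℝ, 1 ≤ t → 0 < φ t) → (∀ t : ℝ, 1 ≤ t → φ t ≤ B) →
      ∀ r : ℝ, 1 < r → r < 2 →
        sSup {y : ℝ | ∃ t : ℝ, 1 ≤ t ∧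
            y = (t * Real.log (Real.log (Real.exp (Real.exp 1) + t)) * φ t)
                  ^ (1 / r) / t}
          ≤ c * (Real.log (r / (r - 1)) ^ (δ / r)
              + Real.log (r / (r - 1)) ^ (1 / r) *
                  sSup {y : ℝ | ∃ t : ℝ,
                    Real.exp (Real.exp (Real.log (r / (r - 1)) ^ δ)) ≤ t ∧
                      y = φ t ^ (1 / r)}) := by
  set M : ℝ := max B 1 with hM
  have hM1 : 1 ≤ M := le_max_right _ _
  have hBM : B ≤ M := le_max_left _ _
  refine ⟨7 * M, by positivity, ?_⟩
  intro φ hφ hφB r hr1 hr2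
  set L : ℝ := Real.log (r / (r - 1)) with hL
  have hs : 0 < r - 1 := by linarith
  have hr0 : 0 < r := by linarith
  have hp0 : 0 < 1 / r := by positivity
  have hp1 : 1 / r ≤ 1 := by rw [div_le_one hr0]; linarith
  have hLhalf : 1 / 2 ≤ L := by
    have h2 : Real.log 2 ≤ L := by
      apply Real.log_le_log (by norm_num)
      rw [le_div_iff₀ hs]; linarith
    have := Real.log_two_gt_d9
    linarith
  have hL0 : 0 < L := by linarith
  have hLs : -Real.log (r - 1) ≤ L := by
    rw [hL, Real.log_div (by positivity) (by positivity)]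
    have := Real.log_pos hr1
    linarith
  have hLd : 1 / 2 ≤ L ^ δ := by
    rcases le_total 1 L with h | h
    · have := Real.one_le_rpow h hδ0.le
      linarith
    · have := Real.rpow_le_rpow_of_exponent_ge hL0 h hδ1.le
      rw [Real.rpow_one] at this
      linarith
  set T : ℝ := Real.exp (Real.exp (L ^ δ)) with hT
  have hTe : Real.exp 1 ≤ T := Real.exp_le_exp.2 (Real.one_le_exp (by linarith))
  have hT1 : 1 ≤ T := le_trans (Real.one_le_exp (by norm_num)) hTe
  set S : ℝ := sSup {y : ℝ | ∃ t : ℝ, T ≤ t ∧ y = φ t ^ (1 / r)} with hS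
  have hφM : ∀ t, 1 ≤ t → φ t ^ (1 / r) ≤ M := fun t ht =>
    (Real.rpow_le_rpow (hφ t ht).le ((hφB t ht).trans hBM) hp0.le).trans
      (rpow_le_self' M _ hM1 hp1)
  have hbdd : BddAbove {y : ℝ | ∃ t : ℝ, T ≤ t ∧ y = φ t ^ (1 / r)} := by
    refine ⟨M, ?_⟩
    rintro y ⟨t, ht, rfl⟩
    exact hφM t (hT1.trans ht)
  have hS0 : 0 ≤ S := by
    apply Real.sSup_nonneg
    rintro y ⟨t, ht, rfl⟩
    exact Real.rpow_nonneg (hφ t (hT1.trans ht)).le _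
  have hX0 : 0 ≤ L ^ (δ / r) := by positivity
  have hY0 : 0 ≤ L ^ (1 / r) := by positivity
  apply Real.sSup_le _ (by positivity)
  rintro y ⟨t, ht, rfl⟩
  have ht0 : 0 < t := by linarith
  set Q := Real.log (Real.log (Real.exp (Real.exp 1) + t)) with hQ
  have hQ0 : 0 ≤ Q := LL_nonneg t ht0.le
  have hφt := hφ t ht
  have hF0 : 0 ≤ φ t ^ (1 / r) := by positivity
  rcases le_total t T with htT | htT
  · have hQ5 : Q ≤ 5 * L ^ δ := by
      have h1 := LL_mono t T ht0.le htT
      have h2 := LL_le T hTe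
      rw [hT, Real.log_exp, Real.log_exp, ← hT] at h2
      linarith
    have hQp : Q ^ (1 / r) ≤ 5 * L ^ (δ / r) := by
      calc Q ^ (1 / r) ≤ (5 * L ^ δ) ^ (1 / r) := Real.rpow_le_rpow hQ0 hQ5 hp0.le
        _ = 5 ^ (1 / r) * L ^ (δ / r) := by
          rw [Real.mul_rpow (by norm_num) (by positivity), ← Real.rpow_mul hL0.le, mul_one_div]
        _ ≤ _ := by
          gcongr
          exact rpow_le_self' 5 _ (by norm_num) hp1
    have htp : t ^ (1 / r) ≤ t := rpow_le_self' t _ ht hp1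
    rw [div_le_iff₀ ht0, Real.mul_rpow (by positivity) hφt.le, Real.mul_rpow ht0.le hQ0]
    calc t ^ (1 / r) * Q ^ (1 / r) * φ t ^ (1 / r)
        ≤ t * (5 * L ^ (δ / r)) * M := by
          gcongr
          exact hφM t ht
      _ = (5 * M) * (L ^ (δ / r)) * t := by ring
      _ ≤ _ := by
          gcongr
          · norm_num
          · have : 0 ≤ L ^ (1 / r) * S := by positivity
            linarith
  · have hφS : φ t ^ (1 / r) ≤ S := le_csSup hbdd ⟨t, htT, rfl⟩
    have hte : Real.exp 1 ≤ t := hTe.trans htT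
    have hu : 1 ≤ Real.log t := by rwa [Real.le_log_iff_exp_le ht0]
    set u := Real.log t with hu'
    have hu0 : 0 < u := by linarith
    have hlu : Real.log u ≤ (r - 1) * u + L := by
      have h1 := Real.log_le_sub_one_of_pos (mul_pos hs hu0)
      rw [Real.log_mul hs.ne' hu0.ne'] at h1
      linarith
    have hQ1 : Q ≤ 7 * L * t ^ (r - 1) := by
      have h1 := LL_le t hte
      have h2 : t ^ (r - 1) = Real.exp ((r - 1) * u) := by
        rw [Real.rpow_def_of_pos ht0, mul_comm]
      have h3 := Real.add_one_le_exp ((r - 1) * u)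
      have h4 : 0 < (r - 1) * u := by positivity
      rw [h2]
      have h5 : Q ≤ 2 + ((r - 1) * u + L) := by linarith
      nlinarith
    have hkey : (t * Q) ^ (1 / r) ≤ 7 * L ^ (1 / r) * t := by
      calc (t * Q) ^ (1 / r) ≤ (7 * L * t ^ r) ^ (1 / r) := by
            apply Real.rpow_le_rpow (by positivity) _ hp0.le
            have : t ^ r = t ^ (r - 1) * t := by
              rw [← Real.rpow_add_one ht0.ne']; norm_num
            rw [this]
            nlinarith
        _ = 7 ^ (1 / r) * L ^ (1 / r) * t := by
            rw [Real.mul_rpow (by positivity) (by positivity),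
              Real.mul_rpow (by positivity) (by positivity), ← Real.rpow_mul ht0.le,
              mul_one_div_cancel hr0.ne', Real.rpow_one]
        _ ≤ _ := by
            gcongr
            exact rpow_le_self' 7 _ (by norm_num) hp1
    rw [div_le_iff₀ ht0, Real.mul_rpow (by positivity) hφt.le]
    calc (t * Q) ^ (1 / r) * φ t ^ (1 / r) ≤ (7 * L ^ (1 / r) * t) * S := by
          gcongr
      _ = (7 * 1) * (L ^ (1 / r) * S) * t := by ring
      _ ≤ _ := by
          gcongr
          linarith

end RT

end
end

section
/- One has ∫_{E} w_k dx = 1/3, where E = ∪_{l≥1} ∪_{I ∈ ℐ_l} I^Δ and w_k(x) = Σ_{l=1}^∞ (3^k/(3^{k−1}+1))^l · χ_{Ω_l}(x). Equivalently, w_k(E) = (1/3)·w_k([0,1]). -/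
open MeasureTheory Set Filter Topology
open scoped ENNReal

noncomputable section

namespace RT

/-! ### Auxiliary lemmas -/

lemma tri_norm {J : ℝ × ℝ} (h : IsTriadic J) :
    0 < len J ∧ ∃ n : ℤ, J.1 = len J * n ∧ J.2 = len J * (n + 1) := by
  obtain ⟨j, n, h1, h2⟩ := h
  have hl : len J = (3 : ℝ) ^ j := by
    unfold len; rw [h1, h2]; ring
  rw [hl]
  exact ⟨by positivity, n, h1, h2⟩

lemma tri_eq_of_mem {J J' : ℝ × ℝ} (h : IsTriadic J) (h' : IsTriadic J')
    (hl : len J = len J') {x : ℝ} (hx : x ∈ ivl J) (hx' : x ∈ ivl J') : J = J' := by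
  obtain ⟨hp, n, h1, h2⟩ := tri_norm h
  obtain ⟨-, n', h1', h2'⟩ := tri_norm h'
  rw [← hl] at h1' h2'
  obtain ⟨a, b⟩ := hx
  obtain ⟨a', b'⟩ := hx'
  rw [h1] at a
  rw [h2] at b
  rw [h1'] at a'
  rw [h2'] at b'
  have e1 : (n : ℝ) < n' + 1 := lt_of_mul_lt_mul_left (a.trans_lt b') hp.le
  have e2 : (n' : ℝ) < n + 1 := lt_of_mul_lt_mul_left (a'.trans_lt b) hp.le
  have e3 : n < n' + 1 := by exact_mod_cast e1
  have e4 : n' < n + 1 := by exact_mod_cast e2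
  have e : n = n' := by omega
  subst e
  exact Prod.ext (h1.trans h1'.symm) (h2.trans h2'.symm)

lemma ivl_mid_subset {J : ℝ × ℝ} (h : 0 ≤ len J) : ivl (mid J) ⊆ ivl J := by
  unfold len at h
  intro x hx
  simp only [ivl, mid, mem_Ico] at hx ⊢
  constructor <;> linarith [hx.1, hx.2]

lemma len_mid (J : ℝ × ℝ) : len (mid J) = (1 / 3) * len J := by
  simp only [len, mid]; ring

lemma J_props (k l : ℕ) : ∀ J ∈ Jfam k (l + 1),
    IsTriadic J ∧ len J = (1 / 3 ^ k) ^ l ∧ ivl J ⊆ Ico (0 : ℝ) 1 := by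
  induction l with
  | zero =>
    intro J hJ
    have : J = (0, 1) := by simpa [Jfam] using hJ
    subst this
    exact ⟨⟨0, 0, by simp, by simp⟩, by simp [len], by simp [ivl]⟩
  | succ l ih =>
    intro J' hJ
    obtain ⟨ht, J, hJ, hl, hs⟩ := hJ
    obtain ⟨h1, h2, h3⟩ := ih J hJ
    refine ⟨ht, ?_, hs.trans ((ivl_mid_subset (tri_norm h1).1.le).trans h3)⟩
    rw [hl, h2, pow_succ]; ring

lemma J_countable (k l : ℕ) : (Jfam k (l + 1)).Countable := by
  refine (countable_range (fun n : ℤ => (((1 / 3 ^ k : ℝ) ^ l * n, (1 / 3 ^ k : ℝ) ^ l * (n + 1)) : ℝ × ℝ))).mono ?_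
  intro J hJ
  obtain ⟨h1, h2, h3⟩ := J_props k l J hJ
  obtain ⟨-, n, a, b⟩ := tri_norm h1
  rw [h2] at a b
  exact ⟨n, (Prod.ext a b).symm⟩

/-- Union of a family of subintervals of the members of `𝒥_{l+1}`. -/
def UU (k : ℕ) (f : ℝ × ℝ → ℝ × ℝ) (l : ℕ) : Set ℝ := ⋃ J ∈ Jfam k (l + 1), ivl (f J)

lemma UU_meas (k : ℕ) (f : ℝ × ℝ → ℝ × ℝ) (l : ℕ) : MeasurableSet (UU k f l) :=
  MeasurableSet.biUnion (J_countable k l) fun _ _ => measurableSet_Ico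

lemma J_eq {k l : ℕ} {J J' : ℝ × ℝ} (h : J ∈ Jfam k (l + 1)) (h' : J' ∈ Jfam k (l + 1))
    {x : ℝ} (hx : x ∈ ivl J) (hx' : x ∈ ivl J') : J = J' := by
  obtain ⟨h1, h2, -⟩ := J_props k l J h
  obtain ⟨h1', h2', -⟩ := J_props k l J' h'
  exact tri_eq_of_mem h1 h1' (h2.trans h2'.symm) hx hx'

lemma UU_vol (k : ℕ) (f : ℝ × ℝ → ℝ × ℝ) (l : ℕ) (c : ℝ) (hc : 0 ≤ c)
    (hf : ∀ J ∈ Jfam k (l + 1), ivl (f J) ⊆ ivl J ∧ len (f J) = c * len J) :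
    volume (UU k f l) = ENNReal.ofReal c * volume (UU k id l) := by
  have key : ∀ g : ℝ × ℝ → ℝ × ℝ, (∀ J ∈ Jfam k (l + 1), ivl (g J) ⊆ ivl J) →
      volume (UU k g l) = ∑' J : Jfam k (l + 1), ENNReal.ofReal (len (g J)) := by
    intro g hg
    unfold UU
    rw [measure_biUnion (f := fun J => ivl (g J)) (J_countable k l) _
      (fun _ _ => measurableSet_Ico)]
    · simp [ivl, len]
    · intro J hJ J' hJ' hne
      refine Set.disjoint_left.2 fun x hx hx' => hne ?_
      exact J_eq hJ hJ' (hg J hJ hx) (hg J' hJ' hx')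
  rw [key f fun J hJ => (hf J hJ).1, key id fun J hJ => subset_rfl, ← ENNReal.tsum_mul_left]
  refine tsum_congr fun J => ?_
  rw [(hf J J.2).2, ENNReal.ofReal_mul hc]; rfl

lemma UU_succ (k : ℕ) (hk : 2 ≤ k) (l : ℕ) : UU k id (l + 1) = UU k mid l := by
  ext x
  simp only [UU, mem_iUnion, id]
  constructor
  · rintro ⟨J', ⟨ht, J, hJ, hl, hs⟩, hx⟩
    exact ⟨J, hJ, hs hx⟩
  · rintro ⟨J, hJ, hx⟩
    obtain ⟨⟨j, n, h1, h2⟩, -, -⟩ := J_props k l J hJ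
    obtain ⟨q, rfl⟩ : ∃ q, k = q + 1 := ⟨k - 1, by omega⟩
    set s : ℝ := (3 : ℝ) ^ (j - (q + 1 : ℕ)) with hs
    have hs0 : 0 < s := by positivity
    have hj : (3 : ℝ) ^ j = s * 3 ^ (q + 1) := by
      rw [hs, zpow_sub₀ (by norm_num), zpow_natCast]; field_simp
    have hlen : len J = s * 3 ^ (q + 1) := by
      rw [← hj]; simp only [len, h1, h2]; ring
    have m1 : (mid J).1 = s * ((3 ^ (q + 1) * n + 3 ^ q : ℤ) : ℝ) := by
      simp only [mid, h1, h2, hj]; push_cast; ring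
    have m2 : (mid J).2 = s * ((3 ^ (q + 1) * n + 3 ^ q + 3 ^ q : ℤ) : ℝ) := by
      simp only [mid, h1, h2, hj]; push_cast; ring
    obtain ⟨hxa, hxb⟩ := hx
    rw [m1] at hxa
    rw [m2] at hxb
    set N := ⌊x / s⌋ with hN
    have f1 : s * (N : ℝ) ≤ x := by
      have := Int.floor_le (x / s)
      rw [le_div_iff₀ hs0] at this; linarith
    have f2 : x < s * ((N : ℝ) + 1) := by
      have := Int.lt_floor_add_one (x / s)
      rw [div_lt_iff₀ hs0] at this; linarith
    have g1 : (3 ^ (q + 1) * n + 3 ^ q : ℤ) < N + 1 := by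
      have := lt_of_mul_lt_mul_left (hxa.trans_lt f2) hs0.le
      exact_mod_cast this
    have g2 : N < (3 ^ (q + 1) * n + 3 ^ q + 3 ^ q : ℤ) := by
      have := lt_of_mul_lt_mul_left (f1.trans_lt hxb) hs0.le
      exact_mod_cast this
    refine ⟨(s * N, s * (N + 1)), ⟨⟨_, N, rfl, rfl⟩, J, hJ, ?_, ?_⟩, f1, f2⟩
    · rw [hlen]; simp only [len]; field_simp; ring
    · refine Ico_subset_Ico ?_ ?_
      · rw [m1]
        refine mul_le_mul_of_nonneg_left ?_ hs0.le
        exact_mod_cast Int.lt_add_one_iff.1 g1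
      · rw [m2]
        refine mul_le_mul_of_nonneg_left ?_ hs0.le
        exact_mod_cast Int.add_one_le_iff.2 g2

lemma mid_ok {k l : ℕ} : ∀ J ∈ Jfam k (l + 1), ivl (mid J) ⊆ ivl J ∧
    len (mid J) = (1 / 3) * len J := fun J hJ =>
  ⟨ivl_mid_subset (tri_norm (J_props k l J hJ).1).1.le, len_mid J⟩

lemma UU_id_vol (k : ℕ) (hk : 2 ≤ k) (l : ℕ) :
    volume (UU k id l) = ENNReal.ofReal ((1 / 3) ^ l) := by
  induction l with
  | zero => simp [UU, Jfam, ivl]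
  | succ l ih =>
    rw [UU_succ k hk, UU_vol k mid l (1 / 3) (by norm_num) mid_ok, ih,
      ← ENNReal.ofReal_mul (by norm_num), pow_succ']

lemma UU_mid_subset (k l : ℕ) : UU k mid l ⊆ UU k id l :=
  iUnion₂_mono fun J hJ => (mid_ok J hJ).1

lemma UU_anti (k : ℕ) (hk : 2 ≤ k) : Antitone (UU k id) :=
  antitone_nat_of_succ_le fun l => by
    rw [UU_succ k hk]; exact UU_mid_subset k l

lemma P_ok {k : ℕ} (hk : 2 ≤ k) {P : ℝ × ℝ → ℝ × ℝ} (hP : GoodP k P) {l : ℕ} :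
    ∀ J ∈ Jfam k (l + 1), ivl (P J) ⊆ ivl J ∧ len (P J) = (1 / 3 ^ k) * len J ∧
      Disjoint (ivl (P J)) (ivl (mid J)) ∧ 0 ≤ len (P J) := by
  intro J hJ
  obtain ⟨h1, -, h3⟩ := J_props k l J hJ
  obtain ⟨t, hl, ha⟩ := hP J h1 h3
  have hp := (tri_norm h1).1
  have hle : len (P J) ≤ len J / 3 := by
    rw [hl]
    have : (3 : ℝ) ≤ 3 ^ k := by
      calc (3 : ℝ) = 3 ^ 1 := by norm_num
        _ ≤ 3 ^ k := pow_le_pow_right₀ (by norm_num) (by omega)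
    gcongr
  refine ⟨?_, by rw [hl]; ring, ?_, (tri_norm t).1.le⟩
  · unfold len at hle hp
    refine Ico_subset_Ico ?_ ?_ <;> rcases ha with ha | ha <;> simp only [mid] at ha <;> linarith
  · refine Set.disjoint_left.2 fun x hx hx' => ?_
    obtain ⟨a, b⟩ := hx
    obtain ⟨a', b'⟩ := hx'
    rcases ha with ha | ha <;> linarith

lemma UU_P_subset {k : ℕ} (hk : 2 ≤ k) {P : ℝ × ℝ → ℝ × ℝ} (hP : GoodP k P) (l : ℕ) :
    UU k P l ⊆ UU k id l :=
  iUnion₂_mono fun J hJ => (P_ok hk hP J hJ).1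

lemma UU_P_disj {k : ℕ} (hk : 2 ≤ k) {P : ℝ × ℝ → ℝ × ℝ} (hP : GoodP k P) {l m : ℕ}
    (h : l < m) : Disjoint (UU k P l) (UU k P m) := by
  have h1 : UU k P m ⊆ UU k mid l := by
    rw [← UU_succ k hk]
    exact (UU_P_subset hk hP m).trans (UU_anti k hk h)
  refine Disjoint.mono_right h1 (Set.disjoint_left.2 fun x hx hx' => ?_)
  simp only [UU, mem_iUnion] at hx hx'
  obtain ⟨J, hJ, hx⟩ := hx
  obtain ⟨J', hJ', hx'⟩ := hx'
  have := J_eq hJ hJ' ((P_ok hk hP J hJ).1 hx) ((mid_ok J' hJ').1 hx')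
  subst this
  exact Set.disjoint_left.1 (P_ok hk hP J hJ).2.2.1 hx hx'

lemma UU_P_vol {k : ℕ} (hk : 2 ≤ k) {P : ℝ × ℝ → ℝ × ℝ} (hP : GoodP k P) (l : ℕ) :
    volume (UU k P l) = ENNReal.ofReal ((1 / 3 ^ k) * (1 / 3) ^ l) := by
  rw [UU_vol k P l (1 / 3 ^ k) (by positivity)
    (fun J hJ => ⟨(P_ok hk hP J hJ).1, (P_ok hk hP J hJ).2.1⟩), UU_id_vol k hk,
    ← ENNReal.ofReal_mul (by positivity)]

lemma UU_midP_vol {k : ℕ} (hk : 2 ≤ k) {P : ℝ × ℝ → ℝ × ℝ} (hP : GoodP k P) (l : ℕ) :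
    volume (UU k (fun J => mid (P J)) l) =
      ENNReal.ofReal ((1 / 3) * ((1 / 3 ^ k) * (1 / 3) ^ l)) := by
  rw [UU_vol k _ l ((1 / 3) * (1 / 3 ^ k)) (by positivity)
    (fun J hJ => ⟨(ivl_mid_subset (P_ok hk hP J hJ).2.2.2).trans (P_ok hk hP J hJ).1, by
      rw [len_mid, (P_ok hk hP J hJ).2.1, mul_assoc]⟩), UU_id_vol k hk,
    ← ENNReal.ofReal_mul (by positivity), mul_assoc]

lemma UU_midP_subset {k : ℕ} (hk : 2 ≤ k) {P : ℝ × ℝ → ℝ × ℝ} (hP : GoodP k P) (l : ℕ) :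
    UU k (fun J => mid (P J)) l ⊆ UU k P l :=
  iUnion₂_mono fun J hJ => ivl_mid_subset (P_ok hk hP J hJ).2.2.2

lemma Omega_eq (k : ℕ) (P : ℝ × ℝ → ℝ × ℝ) (l : ℕ) : Omega k P (l + 1) = UU k P l := by
  simp only [Omega, Ifam, UU, biUnion_image]

lemma E_eq (k : ℕ) (P : ℝ × ℝ → ℝ × ℝ) :
    (⋃ l : ℕ, ⋃ I ∈ Ifam k P (l + 1), ivl (mid I)) =
      ⋃ l : ℕ, UU k (fun J => mid (P J)) l := by
  simp only [Ifam, UU, biUnion_image]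

lemma geom_aux {k : ℕ} (hk : 2 ≤ k) :
    HasSum (fun l : ℕ => alpha k ^ (l + 1) * ((1 / 3 ^ k) * (1 / 3) ^ l)) 1 := by
  obtain ⟨q, rfl⟩ : ∃ q, k = q + 1 := ⟨k - 1, by omega⟩
  have hq : (0 : ℝ) < 3 ^ q := by positivity
  have h := (hasSum_geometric_of_lt_one (r := (3 : ℝ) ^ q / (3 ^ q + 1)) (by positivity)
    (by rw [div_lt_one (by positivity)]; linarith)).mul_left (1 / (3 ^ q + 1))
  have e1 : (fun l : ℕ => alpha (q + 1) ^ (l + 1) * ((1 / 3 ^ (q + 1)) * (1 / 3) ^ l)) =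
      fun l : ℕ => 1 / ((3 : ℝ) ^ q + 1) * (3 ^ q / (3 ^ q + 1)) ^ l := by
    funext l
    have : alpha (q + 1) = 3 * (3 ^ q / (3 ^ q + 1)) := by
      simp only [alpha, Nat.add_sub_cancel]; ring
    rw [this, pow_succ, mul_pow, pow_succ 3 q]
    have h3 : (3 : ℝ) ^ l * (1 / 3) ^ l = 1 := by rw [← mul_pow]; norm_num
    generalize hr : ((3 : ℝ) ^ q / (3 ^ q + 1)) ^ l = r
    calc _ = (3 ^ l * (1 / 3) ^ l) * (r * (3 * (3 ^ q / (3 ^ q + 1)) * (1 / (3 ^ q * 3)))) := by ring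
      _ = _ := by rw [h3]; field_simp
  have e2 : 1 / ((3 : ℝ) ^ q + 1) * (1 - 3 ^ q / (3 ^ q + 1))⁻¹ = 1 := by
    have : (1 : ℝ) - 3 ^ q / (3 ^ q + 1) = 1 / (3 ^ q + 1) := by field_simp; ring
    rw [this]; field_simp
  rw [e2] at h
  rw [e1]
  exact h

lemma int_aux {k : ℕ} (P : ℝ × ℝ → ℝ × ℝ) (S : Set ℝ) (c : ℝ) (hk : 2 ≤ k)
    (hS : ∀ l, (volume (UU k P l ∩ S)).toReal = c * ((1 / 3 ^ k) * (1 / 3) ^ l))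
    (hfin : ∀ l, volume (UU k P l) ≠ ∞) :
    ∫ x in S, wk k P x = c := by
  have hα : 0 ≤ alpha k := by unfold alpha; positivity
  have hint : ∀ l : ℕ, ∫ x in S, alpha k ^ (l + 1) *
      (UU k P l).indicator (fun _ => (1 : ℝ)) x =
      c * (alpha k ^ (l + 1) * ((1 / 3 ^ k) * (1 / 3) ^ l)) := by
    intro l
    rw [integral_const_mul, integral_indicator_const _ (UU_meas k P l), Measure.real,
      Measure.restrict_apply (UU_meas k P l), hS l]
    simp only [smul_eq_mul]; ring
  have hsum := (geom_aux hk).mul_left c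
  have h := hasSum_integral_of_summable_integral_norm (μ := volume.restrict S)
    (F := fun (l : ℕ) x => alpha k ^ (l + 1) * (UU k P l).indicator (fun _ => (1 : ℝ)) x) ?_ ?_
  · simp only [hint] at h
    have := h.unique hsum
    simp only [wk, Omega_eq]
    rw [this, mul_one]
  · intro l
    refine Integrable.const_mul ?_ _
    refine Integrable.restrict ?_
    exact (integrable_indicator_iff (UU_meas k P l)).2 (integrableOn_const (hfin l))
  · refine hsum.summable.congr fun l => ?_
    rw [← hint l]
    refine integral_congr_ae (ae_of_all _ fun x => ?_)
    refine Eq.symm (Real.norm_of_nonneg (mul_nonneg (by positivity) ?_))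
    exact indicator_nonneg (fun _ _ => zero_le_one) x

/-- With `E = ⋃_{l≥1} ⋃_{I ∈ ℐ_l} I^Δ`, one has
`∫_E w_k = 1/3`; equivalently `w_k(E) = (1/3) w_k([0,1])`. -/
theorem statement16 (k : ℕ) (hk : 2 ≤ k) (P : ℝ × ℝ → ℝ × ℝ)
    (hP : GoodP k P) :
    (∫ x in ⋃ l : ℕ, ⋃ I ∈ Ifam k P (l + 1), ivl (mid I), wk k P x)
        = 1 / 3 ∧
      (∫ x in ⋃ l : ℕ, ⋃ I ∈ Ifam k P (l + 1), ivl (mid I), wk k P x)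
        = (1 / 3) * ∫ x in Icc (0:ℝ) 1, wk k P x := by
  have hfin : ∀ l, volume (UU k P l) ≠ ∞ := fun l => by
    rw [UU_P_vol hk hP]; exact ENNReal.ofReal_ne_top
  have h1 : (∫ x in ⋃ l : ℕ, ⋃ I ∈ Ifam k P (l + 1), ivl (mid I), wk k P x) = 1 / 3 := by
    rw [E_eq]
    refine int_aux P _ _ hk (fun l => ?_) hfin
    have : UU k P l ∩ ⋃ l : ℕ, UU k (fun J => mid (P J)) l = UU k (fun J => mid (P J)) l := by
      ext x
      simp only [mem_inter_iff, mem_iUnion]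
      constructor
      · rintro ⟨hx, m, hm⟩
        have hm' := UU_midP_subset hk hP m hm
        rcases lt_trichotomy l m with h | h | h
        · exact absurd hm' (Set.disjoint_left.1 (UU_P_disj hk hP h) hx)
        · exact h ▸ hm
        · exact absurd hx (Set.disjoint_left.1 (UU_P_disj hk hP h) hm')
      · intro hx
        exact ⟨UU_midP_subset hk hP l hx, l, hx⟩
    rw [this, UU_midP_vol hk hP, ENNReal.toReal_ofReal (by positivity)]
  have h2 : ∫ x in Icc (0:ℝ) 1, wk k P x = 1 := by
    refine int_aux P _ _ hk (fun l => ?_) hfin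
    have : UU k P l ∩ Icc (0:ℝ) 1 = UU k P l := by
      refine inter_eq_left.2 ((UU_P_subset hk hP l).trans ?_)
      exact iUnion₂_subset fun J hJ => ((J_props k l J hJ).2.2).trans Ico_subset_Icc_self
    rw [this, UU_P_vol hk hP, ENNReal.toReal_ofReal (by positivity), one_mul]
  exact ⟨h1, by rw [h1, h2, mul_one]⟩

end RT

end
end
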